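/- arXiv:2207.06393 — 9 statements merged into one kernel-verified Lean document; each statement's English description precedes it below -/
import Mathlib

section
/- The class LO of all finite linear orders — finite structures in the language of one binary relation symbol < interpreted as a strict linear order — satisfies the Substructure Disjoint Amalgamation Property (SDAP). -/
/-!
Two linear orders `B`, `C` over a common suborder `A` amalgamate disjointly (`amalg`): on
`B ∪ (C ∖ A)` put `b < c` when some `a ∈ A` satisfies `b ≤ a < c`, and `c < b` otherwise. The
amalgam has no points beyond those of `B` and `C`.

For the second half of SDAP, let `C = A ∪ {v, w}`. Insert into `C` one new point strictly between
`v` and `w` (`cutExt`, cutting just above the smaller of the two) to obtain `C'`, and let `A'` be `A`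
together with this point. Given `D = B ∪ {v''}` and the one-point extension `B ∪ {wτ}` realizing
`τ`, take `E` to be their disjoint amalgam over `B`. The types of `v''` and `wτ` over `A'` place
them on opposite sides of the separating point, just as `v` and `w`, so transitivity forces the
order between them in `E` to be the order between `v` and `w` in `C`. Since the language is binary,
this together with the types over `A` yields the required copy of `C`.
-/

open FirstOrder FirstOrder.Language FirstOrder.Language.Structure CategoryTheory

universe u v w

namespace CDP

variable {L : FirstOrder.Language.{u, v}}

/-- `x` realizes the same quantifier-free 1-type over the empty set as `a`. -/
def SameEmptyType {M : Type*} [L.Structure M] (a x : M) : Prop :=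
  ∀ {n : ℕ} (R : L.Relations n),
    RelMap R (fun _ : Fin n => x) ↔ RelMap R (fun _ : Fin n => a)

/-- All relations hold only on tuples of pairwise distinct elements. -/
def NoLoops (M : Type*) [L.Structure M] : Prop :=
  ∀ {n : ℕ} (R : L.Relations n) (t : Fin n → M), RelMap R t → Function.Injective t

/-- `D` is an extension of `B` (via the embedding `f`) by exactly the one new vertex `v`. -/
def IsOnePointExt {B D : Type*} [L.Structure B] [L.Structure D]
    (f : B ↪[L] D) (v : D) : Prop :=
  v ∉ Set.range ⇑f ∧ ∀ d : D, d = v ∨ d ∈ Set.range ⇑f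

/-- `C` is an extension of `A` (via the embedding `f`) by exactly the two new vertices `v, w`. -/
def IsTwoPointExt {A C : Type*} [L.Structure A] [L.Structure C]
    (f : A ↪[L] C) (v w : C) : Prop :=
  v ≠ w ∧ v ∉ Set.range ⇑f ∧ w ∉ Set.range ⇑f ∧
    ∀ c : C, c = v ∨ c = w ∨ c ∈ Set.range ⇑f

/-- The quantifier-free 1-type of `v` over (the copy via `f` of) `A` in `D` equals the
quantifier-free 1-type of `u` over (the copy via `g` of) `A` in `E`; here `none` stands
for the distinguished new point. -/
def QF1Eq {A D E : Type*} [L.Structure A] [L.Structure D] [L.Structure E]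
    (f : A ↪[L] D) (v : D) (g : A ↪[L] E) (u : E) : Prop :=
  ∀ {n : ℕ} (R : L.Relations n) (t : Fin n → Option A),
    RelMap R (fun i => (t i).elim v ⇑f) ↔ RelMap R (fun i => (t i).elim u ⇑g)

/-- The substructure of `D` on (the copy of) `A ∪ {v, w}` is isomorphic to the substructure of
`E` on `A ∪ {v', w'}` by the identity on `A` together with `v ↦ v'`, `w ↦ w'`. -/
def QF2Eq {A D E : Type*} [L.Structure A] [L.Structure D] [L.Structure E]
    (f : A ↪[L] D) (v w : D) (g : A ↪[L] E) (v' w' : E) : Prop :=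
  ∀ {n : ℕ} (R : L.Relations n) (t : Fin n → A ⊕ Fin 2),
    RelMap R (fun i => Sum.elim (⇑f) ![v, w] (t i)) ↔
      RelMap R (fun i => Sum.elim (⇑g) ![v', w'] (t i))

variable (K : Set (Bundled.{w} L.Structure))

/-- The disjoint (strong) amalgamation property. -/
def DAP : Prop :=
  ∀ A B C : Bundled.{w} L.Structure, A ∈ K → B ∈ K → C ∈ K →
    ∀ (f : A ↪[L] B) (g : A ↪[L] C),
      ∃ D : Bundled.{w} L.Structure, D ∈ K ∧
        ∃ (r : B ↪[L] D) (s : C ↪[L] D),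
          r.comp f = s.comp g ∧
          Set.range ⇑r ∩ Set.range ⇑s = Set.range ⇑(r.comp f)

/-- The free amalgamation property: a disjoint amalgam in which no tuple satisfying a relation
contains elements of both `range r ∖ range (r ∘ f)` and `range s ∖ range (s ∘ g)`. -/
def FAP : Prop :=
  ∀ A B C : Bundled.{w} L.Structure, A ∈ K → B ∈ K → C ∈ K →
    ∀ (f : A ↪[L] B) (g : A ↪[L] C),
      ∃ D : Bundled.{w} L.Structure, D ∈ K ∧
        ∃ (r : B ↪[L] D) (s : C ↪[L] D),
          r.comp f = s.comp g ∧
          Set.range ⇑r ∩ Set.range ⇑s = Set.range ⇑(r.comp f) ∧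
          ∀ {n : ℕ} (R : L.Relations n) (t : Fin n → D), RelMap R t →
            ¬ ((∃ i, t i ∈ Set.range ⇑r \ Set.range ⇑(r.comp f)) ∧
               (∃ j, t j ∈ Set.range ⇑s \ Set.range ⇑(s.comp g)))

/-- The Substructure Free Amalgamation Property (SFAP). -/
def SFAP : Prop :=
  FAP K ∧
  ∀ A C : Bundled.{w} L.Structure, A ∈ K → C ∈ K →
  ∀ (iAC : A ↪[L] C) (v w : C), IsTwoPointExt iAC v w →
  ∀ B : Bundled.{w} L.Structure, B ∈ K → ∀ iAB : A ↪[L] B,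
  -- σ : a quantifier-free 1-type over B realized in a member Bσ of K,
  -- with σ ↾ A = qftp(v / A)
  ∀ Bσ : Bundled.{w} L.Structure, Bσ ∈ K →
    ∀ (jσ : B ↪[L] Bσ) (vσ : Bσ), IsOnePointExt jσ vσ →
      QF1Eq (jσ.comp iAB) vσ iAC v →
  -- τ : a quantifier-free 1-type over B realized in a member Bτ of K,
  -- with τ ↾ A = qftp(w / A)
  ∀ Bτ : Bundled.{w} L.Structure, Bτ ∈ K →
    ∀ (jτ : B ↪[L] Bτ) (wτ : Bτ), IsOnePointExt jτ wτ →
      QF1Eq (jτ.comp iAB) wτ iAC w →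
  -- D extends B by one vertex v' with qftp(v'/B) = σ
  ∀ D : Bundled.{w} L.Structure, D ∈ K →
    ∀ (iBD : B ↪[L] D) (v' : D), IsOnePointExt iBD v' →
      QF1Eq iBD v' jσ vσ →
  -- conclusion: E extends D by one vertex w' with qftp(w'/B) = τ,
  -- E ↾ (A ∪ {v', w'}) ≅ C, and E adds no other relations over D
  ∃ E : Bundled.{w} L.Structure, E ∈ K ∧
    ∃ (iDE : D ↪[L] E) (w' : E),
      IsOnePointExt iDE w' ∧
      QF1Eq (iDE.comp iBD) w' jτ wτ ∧
      QF2Eq ((iDE.comp iBD).comp iAB) (iDE v') w' iAC v w ∧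
      (∀ {n : ℕ} (R : L.Relations n) (t : Fin n → E), RelMap R t →
        (∀ i, t i ∈ Set.range ⇑iDE) ∨
        (∀ i, t i = w' ∨ t i ∈ Set.range ⇑(iDE.comp iBD)) ∨
        (∀ i, t i = w' ∨ t i = iDE v' ∨ t i ∈ Set.range ⇑((iDE.comp iBD).comp iAB)))

/-- The body of SDAP, for a given choice of witnesses `A'`, `C'` (with the connecting
embeddings): `C'` is a disjoint amalgam of `A'` and `C` over `A` extending `A'` by the two
vertices `iCC' v`, `iCC' w`, and any two 1-types over a structure `B ⊇ A'` extending the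
types of these two vertices over `A'` can be realized consecutively yielding a copy of `C`
over `A`. -/
def SDAPWitness {A C : Bundled.{w} L.Structure} (iAC : A ↪[L] C) (v w : C)
    (A' C' : Bundled.{w} L.Structure) (iAA' : A ↪[L] A') (iA'C' : A' ↪[L] C')
    (iCC' : C ↪[L] C') : Prop :=
  iA'C'.comp iAA' = iCC'.comp iAC ∧
  Set.range ⇑iA'C' ∩ Set.range ⇑iCC' = Set.range ⇑(iA'C'.comp iAA') ∧
  IsTwoPointExt iA'C' (iCC' v) (iCC' w) ∧
  ∀ B : Bundled.{w} L.Structure, B ∈ K → ∀ iA'B : A' ↪[L] B,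
  ∀ Bσ : Bundled.{w} L.Structure, Bσ ∈ K →
    ∀ (jσ : B ↪[L] Bσ) (vσ : Bσ), IsOnePointExt jσ vσ →
      QF1Eq (jσ.comp iA'B) vσ iA'C' (iCC' v) →
  ∀ Bτ : Bundled.{w} L.Structure, Bτ ∈ K →
    ∀ (jτ : B ↪[L] Bτ) (wτ : Bτ), IsOnePointExt jτ wτ →
      QF1Eq (jτ.comp iA'B) wτ iA'C' (iCC' w) →
  ∀ D : Bundled.{w} L.Structure, D ∈ K →
    ∀ (iBD : B ↪[L] D) (v'' : D), IsOnePointExt iBD v'' →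
      QF1Eq iBD v'' jσ vσ →
  ∃ E : Bundled.{w} L.Structure, E ∈ K ∧
    ∃ (iDE : D ↪[L] E) (w'' : E),
      IsOnePointExt iDE w'' ∧
      QF1Eq (iDE.comp iBD) w'' jτ wτ ∧
      QF2Eq (((iDE.comp iBD).comp iA'B).comp iAA') (iDE v'') w'' iAC v w

/-- The Substructure Disjoint Amalgamation Property (SDAP). -/
def SDAP : Prop :=
  DAP K ∧
  ∀ A C : Bundled.{w} L.Structure, A ∈ K → C ∈ K →
    ∀ (iAC : A ↪[L] C) (v w : C), IsTwoPointExt iAC v w →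
      ∃ A' C' : Bundled.{w} L.Structure, A' ∈ K ∧ C' ∈ K ∧
        ∃ (iAA' : A ↪[L] A') (iA'C' : A' ↪[L] C') (iCC' : C ↪[L] C'),
          SDAPWitness K iAC v w A' C' iAA' iA'C' iCC'

/-- A Fraïssé class: a nonempty class of finite structures, closed under isomorphism and
substructures (equivalently, under embeddability of finite structures), with the joint
embedding and amalgamation properties. -/
def IsFraisseClass : Prop :=
  K.Nonempty ∧
  (∀ M ∈ K, Finite M) ∧
  (∀ M N : Bundled.{w} L.Structure, Nonempty (M ≃[L] N) → (M ∈ K ↔ N ∈ K)) ∧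
  (∀ M ∈ K, ∀ N : Bundled.{w} L.Structure, Nonempty (N ↪[L] M) → N ∈ K) ∧
  (∀ M ∈ K, ∀ N ∈ K, ∃ P ∈ K, Nonempty (M ↪[L] P) ∧ Nonempty (N ↪[L] P)) ∧
  (∀ A B C : Bundled.{w} L.Structure, A ∈ K → B ∈ K → C ∈ K →
    ∀ (f : A ↪[L] B) (g : A ↪[L] C),
      ∃ D : Bundled.{w} L.Structure, D ∈ K ∧
        ∃ (r : B ↪[L] D) (s : C ↪[L] D), r.comp f = s.comp g)

/-- `M` is a Fraïssé limit of `K`: a countably infinite ultrahomogeneous structure whose age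
(the class of finite structures embeddable in it) is `K`. -/
def IsFraisseLimitOf (M : Type w) [L.Structure M] : Prop :=
  Countable M ∧ Infinite M ∧ L.IsUltrahomogeneous M ∧
    ∀ N : Bundled.{w} L.Structure, N ∈ K ↔ (Finite N ∧ Nonempty (N ↪[L] M))

end CDP

/-- The class of all finite linear orders: finite structures in the language of one binary
relation symbol, interpreted as a strict linear order. -/
def finLinOrders : Set (CategoryTheory.Bundled.{w} FirstOrder.Language.order.Structure) :=
  { N | Finite N ∧
        IsStrictTotalOrder N
          (fun a b => FirstOrder.Language.Structure.RelMap
            (L := FirstOrder.Language.order) leSymb ![a, b]) }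

/-! ### Linear orders as structures with one binary relation -/

/-- The strict order relation of a structure in the language of orders (the symbol is called
`leSymb`, but it is interpreted as `<` throughout). -/
def olt {M : Type*} [Language.order.Structure M] (x y : M) : Prop :=
  RelMap (L := Language.order) leSymb ![x, y]

/-- A binary relation, seen as a structure in the language of orders. -/
@[reducible] def relStructure {M : Type*} (r : M → M → Prop) : Language.order.Structure M where
  funMap := fun f => nomatch f
  RelMap := fun {n} R t => match n, R, t with
    | 2, .le, t => r (t 0) (t 1)

theorem relMap_two {M : Type*} [Language.order.Structure M] (R : Language.order.Relations 2)
    (t : Fin 2 → M) : RelMap R t ↔ olt (t 0) (t 1) := by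
  have h : t = ![t 0, t 1] := by
    ext i; fin_cases i <;> rfl
  rw [olt, ← h, Subsingleton.elim R leSymb]

/-- Every relation symbol of the language is binary, so a statement about all relations on all
tuples reduces to pairs. -/
theorem forall_rel {P : ∀ n, Language.order.Relations n → Prop} (h : ∀ R, P 2 R) {n : ℕ}
    (R : Language.order.Relations n) : P n R := by
  cases R; exact h _

theorem olt_irrefl {N : Bundled.{w} Language.order.Structure} (hN : N ∈ finLinOrders.{w})
    (x : N) : ¬ olt x x := by
  have := hN.2
  exact irrefl_of (fun a b : N => RelMap (L := Language.order) leSymb ![a, b]) x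

theorem olt_trans {N : Bundled.{w} Language.order.Structure} (hN : N ∈ finLinOrders.{w})
    {x y z : N} (h : olt x y) (h' : olt y z) : olt x z := by
  have := hN.2
  exact trans_of (fun a b : N => RelMap (L := Language.order) leSymb ![a, b]) h h'

theorem olt_tri {N : Bundled.{w} Language.order.Structure} (hN : N ∈ finLinOrders.{w})
    (x y : N) : olt x y ∨ x = y ∨ olt y x := by
  have := hN.2
  exact trichotomous_of (fun a b : N => RelMap (L := Language.order) leSymb ![a, b]) x y

theorem mem_of_rel {M : Type w} [Finite M] (r : M → M → Prop) (h1 : ∀ x, ¬ r x x)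
    (h2 : ∀ x y z, r x y → r y z → r x z) (h3 : ∀ x y, r x y ∨ x = y ∨ r y x) :
    (⟨M, relStructure r⟩ : Bundled.{w} Language.order.Structure) ∈ finLinOrders.{w} := by
  refine ⟨‹_›, ?_⟩
  change IsStrictTotalOrder M r
  exact { trichotomous := fun a b hab hba => by have := h3 a b; tauto
          irrefl := h1
          trans := h2 }

/-- A map between linear orders preserving and reflecting `<` is automatically injective, hence
an embedding. -/
def mkEmb {M N : Bundled.{w} Language.order.Structure} (hM : M ∈ finLinOrders.{w})
    (hN : N ∈ finLinOrders.{w}) (f : M → N) (hf : ∀ x y, olt (f x) (f y) ↔ olt x y) :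
    M ↪[Language.order] N where
  toFun := f
  inj' := fun x y h => by
    have h1 := hf x y
    have h2 := hf y x
    rw [h] at h1 h2
    have := olt_tri hM x y
    have := olt_irrefl hN (f y)
    tauto
  map_fun' := fun {n} g => nomatch g
  map_rel' := fun {n} R => by
    refine forall_rel (P := fun n R => ∀ x : Fin n → M, RelMap R (f ∘ x) ↔ RelMap R x)
      (fun R x => ?_) R
    rw [relMap_two, relMap_two]
    exact hf _ _

theorem emb_olt {M N : Type*} [Language.order.Structure M] [Language.order.Structure N]
    (f : M ↪[Language.order] N) (x y : M) : olt (f x) (f y) ↔ olt x y := by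
  have := f.map_rel (leSymb : Language.order.Relations 2) ![x, y]
  rwa [relMap_two, relMap_two] at this

theorem qf1_olt {A D E : Type*} [Language.order.Structure A] [Language.order.Structure D]
    [Language.order.Structure E] {f : A ↪[Language.order] D} {v : D}
    {g : A ↪[Language.order] E} {u : E} (h : CDP.QF1Eq f v g u) (a : A) :
    (olt (f a) v ↔ olt (g a) u) ∧ (olt v (f a) ↔ olt u (g a)) := by
  have h1 := h leSymb ![some a, none]
  have h2 := h leSymb ![none, some a]
  rw [relMap_two, relMap_two] at h1 h2
  exact ⟨h1, h2⟩

theorem qf2_of_olt {A D E : Type*} [Language.order.Structure A] [Language.order.Structure D]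
    [Language.order.Structure E] {f : A ↪[Language.order] D} {v w : D}
    {g : A ↪[Language.order] E} {v' w' : E}
    (hv : ∀ a, (olt (f a) v ↔ olt (g a) v') ∧ (olt v (f a) ↔ olt v' (g a)))
    (hw : ∀ a, (olt (f a) w ↔ olt (g a) w') ∧ (olt w (f a) ↔ olt w' (g a)))
    (hvw : olt v w ↔ olt v' w') (hwv : olt w v ↔ olt w' v')
    (hvv : olt v v ↔ olt v' v') (hww : olt w w ↔ olt w' w') :
    CDP.QF2Eq f v w g v' w' := by
  intro n R
  refine forall_rel (P := fun n R => ∀ t : Fin n → A ⊕ Fin 2,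
    RelMap R (fun i => Sum.elim (⇑f) ![v, w] (t i)) ↔
      RelMap R (fun i => Sum.elim (⇑g) ![v', w'] (t i))) (fun R t => ?_) R
  rw [relMap_two, relMap_two]
  rcases t 0 with a | i <;> rcases t 1 with b | j
  · exact (emb_olt f a b).trans (emb_olt g a b).symm
  · fin_cases j
    · exact (hv a).1
    · exact (hw a).1
  · fin_cases i
    · exact (hv b).2
    · exact (hw b).2
  · fin_cases i <;> fin_cases j <;> assumption

/-! ### Disjoint amalgamation of linear orders -/

/-- The order on the disjoint amalgam of `B` and `C` over `A`, carried by `B` together with the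
elements of `C` outside `A`. An element `b` of `B` lies below a new element `c` exactly when some
`a` in `A` separates them, `b ≤ a < c`; where `A` does not decide, `c` is put below `b`. -/
def amalgLT {A B C : Type*} [Language.order.Structure B] [Language.order.Structure C]
    (f : A → B) (g : A → C) : B ⊕ {c : C // c ∉ Set.range g} → B ⊕ {c : C // c ∉ Set.range g} → Prop
  | .inl b, .inl b' => olt b b'
  | .inr c, .inr c' => olt c.1 c'.1
  | .inl b, .inr c => ∃ a, ¬ olt (f a) b ∧ olt (g a) c.1
  | .inr c, .inl b => ¬ ∃ a, ¬ olt (f a) b ∧ olt (g a) c.1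

/-- The disjoint amalgam of `B` and `C` over `A`, with order `amalgLT`. -/
def amalgExt {A : Type*} (B C : Bundled.{w} Language.order.Structure) (f : A → B) (g : A → C) :
    Bundled.{w} Language.order.Structure :=
  ⟨B ⊕ {c : C // c ∉ Set.range g}, relStructure (amalgLT f g)⟩

/-- Disjoint amalgamation of finite linear orders, by an amalgam with no points beyond those of
`B` and `C`. -/
theorem amalg {A B C : Bundled.{w} Language.order.Structure}
    (hB : B ∈ finLinOrders.{w}) (hC : C ∈ finLinOrders.{w})
    (f : A ↪[Language.order] B) (g : A ↪[Language.order] C) :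
    ∃ D : Bundled.{w} Language.order.Structure, D ∈ finLinOrders.{w} ∧
      ∃ (r : B ↪[Language.order] D) (s : C ↪[Language.order] D),
        r.comp f = s.comp g ∧
        Set.range ⇑r ∩ Set.range ⇑s = Set.range ⇑(r.comp f) ∧
        ∀ d, d ∈ Set.range ⇑r ∨ ∃ c, c ∉ Set.range ⇑g ∧ d = s c := by
  classical
  have iB := olt_irrefl hB
  have iC := olt_irrefl hC
  have tB := @olt_trans _ hB
  have tC := @olt_trans _ hC
  have cB := olt_tri hB
  have cC := olt_tri hC
  have fg : ∀ a a', olt (f a) (f a') ↔ olt (g a) (g a') := fun a a' =>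
    (emb_olt f a a').trans (emb_olt g a a').symm
  have : Finite B := hB.1
  have : Finite C := hC.1
  let D := amalgExt B C f g
  have hD : D ∈ finLinOrders.{w} := by
    refine mem_of_rel _ ?_ ?_ ?_
    · rintro (b | c)
      · exact iB b
      · exact iC _
    · rintro (x | x) (y | y) (z | z) <;> simp only [amalgLT]
      · exact tB
      · rintro h ⟨a, h1, h2⟩
        exact ⟨a, fun h' => h1 (tB h' h), h2⟩
      · rintro ⟨a, h1, h2⟩ h'
        have h3 : olt (f a) z := by
          by_contra h3
          exact h' ⟨a, h3, h2⟩
        rcases cB x (f a) with h | h | h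
        · exact tB h h3
        · exact h ▸ h3
        · exact (h1 h).elim
      · rintro ⟨a, h1, h2⟩ h'
        exact ⟨a, h1, tC h2 h'⟩
      · rintro h h' ⟨a, h1, h2⟩
        exact h ⟨a, fun h3 => h1 (tB h3 h'), h2⟩
      · rintro h ⟨a, h1, h2⟩
        rcases cC x (g a) with h3 | h3 | h3
        · exact tC h3 h2
        · exact (x.2 ⟨a, h3.symm⟩).elim
        · exact (h ⟨a, h1, h3⟩).elim
      · rintro h h' ⟨a, h1, h2⟩
        exact h' ⟨a, h1, tC h2 h⟩
      · exact tC
    · rintro (x | x) (y | y) <;> simp only [amalgLT, Sum.inl.injEq, Sum.inr.injEq, reduceCtorEq]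
      · exact cB x y
      · tauto
      · tauto
      · rw [Subtype.ext_iff]
        exact cC _ _
  let s₀ : C → D := fun c =>
    if h : c ∈ Set.range g then Sum.inl (f h.choose) else Sum.inr ⟨c, h⟩
  have s_in : ∀ a, s₀ (g a) = Sum.inl (f a) := fun a => by
    have h : g a ∈ Set.range g := ⟨a, rfl⟩
    have h' : h.choose = a := g.injective h.choose_spec
    exact (dif_pos h).trans (congrArg (fun a => Sum.inl (f a)) h')
  have s_out : ∀ c (h : c ∉ Set.range g), s₀ c = Sum.inr ⟨c, h⟩ := fun c h => dif_neg h
  let r : B ↪[Language.order] D := mkEmb hB hD Sum.inl fun x y => Iff.rfl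
  let s : C ↪[Language.order] D := mkEmb hC hD s₀ fun x y => by
    change amalgLT f g (s₀ x) (s₀ y) ↔ _
    by_cases hx : x ∈ Set.range g <;> by_cases hy : y ∈ Set.range g
    · obtain ⟨a, rfl⟩ := hx
      obtain ⟨a', rfl⟩ := hy
      rw [s_in, s_in]
      exact fg a a'
    · obtain ⟨a, rfl⟩ := hx
      rw [s_in, s_out y hy]
      constructor
      · rintro ⟨a', h1, h2⟩
        rw [fg] at h1
        rcases cC (g a) (g a') with h | h | h
        · exact tC h h2
        · exact h ▸ h2
        · exact (h1 h).elim
      · exact fun h => ⟨a, iB _, h⟩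
    · obtain ⟨a, rfl⟩ := hy
      rw [s_in, s_out x hx]
      constructor
      · intro h
        rcases cC x (g a) with h3 | h3 | h3
        · exact h3
        · exact (hx ⟨a, h3.symm⟩).elim
        · exact (h ⟨a, iB _, h3⟩).elim
      · rintro h ⟨a', h1, h2⟩
        rw [fg] at h1
        exact h1 (tC h2 h)
    · rw [s_out x hx, s_out y hy]
      rfl
  refine ⟨D, hD, r, s, ?_, ?_, ?_⟩
  · ext a
    exact (s_in a).symm
  · ext d
    constructor
    · rintro ⟨⟨b, rfl⟩, ⟨c, hc⟩⟩
      by_cases h : c ∈ Set.range g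
      · obtain ⟨a, rfl⟩ := h
        exact ⟨a, (s_in a).symm.trans hc⟩
      · exact nomatch (s_out c h).symm.trans hc
    · rintro ⟨a, rfl⟩
      exact ⟨⟨f a, rfl⟩, ⟨g a, s_in a⟩⟩
  · rintro (b | ⟨c, hc⟩)
    · exact Or.inl ⟨b, rfl⟩
    · exact Or.inr ⟨c, hc, (s_out c hc).symm⟩

/-! ### Inserting a separating point -/

/-- The order on `M` with one further point `none` inserted: `P` is the set of elements of `M`
lying above the new point. -/
def cutLT {M : Type*} [Language.order.Structure M] (P : M → Prop) : Option M → Option M → Prop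
  | some x, some y => olt x y
  | some x, none => ¬ P x
  | none, some y => P y
  | none, none => False

/-- `M` with one further point inserted immediately below the up-set `P`. -/
def cutExt (M : Bundled.{w} Language.order.Structure) (P : M → Prop) :
    Bundled.{w} Language.order.Structure :=
  ⟨Option M, relStructure (cutLT P)⟩

theorem cutExt_mem {M : Bundled.{w} Language.order.Structure} (hM : M ∈ finLinOrders.{w})
    (P : M → Prop) (hP : ∀ x y, olt x y → P x → P y) : cutExt M P ∈ finLinOrders.{w} := by
  have iM := olt_irrefl hM
  have tM := @olt_trans _ hM
  have cM := olt_tri hM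
  have : Finite M := hM.1
  refine mem_of_rel _ ?_ ?_ ?_
  · rintro (_ | x)
    · exact id
    · exact iM x
  · rintro (_ | x) (_ | y) (_ | z) <;> simp only [cutLT]
    · tauto
    · tauto
    · tauto
    · exact fun h h' => hP _ _ h' h
    · tauto
    · intro h h'
      rcases cM x z with h3 | h3 | h3
      · exact h3
      · exact (h (h3 ▸ h')).elim
      · exact (h (hP _ _ h3 h')).elim
    · exact fun h h' h3 => h' (hP _ _ h h3)
    · exact tM
  · rintro (_ | x) (_ | y) <;> simp only [cutLT, Option.some.injEq, reduceCtorEq]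
    · tauto
    · tauto
    · tauto
    · exact cM x y

/-! ### The substructure disjoint amalgamation property -/

/-- The class of all finite linear orders satisfies SDAP. -/
theorem finLinOrders_sdap : CDP.SDAP finLinOrders.{w} := by
  refine ⟨fun A B C _ hB hC f g => ?_, fun A C hA hC iAC v w hvw => ?_⟩
  · obtain ⟨D, hD, r, s, h1, h2, -⟩ := amalg hB hC f g
    exact ⟨D, hD, r, s, h1, h2⟩
  obtain ⟨hne, hv, hw, hcov⟩ := hvw
  -- `m` is the smaller of `v` and `w`; the separating point is inserted immediately above it.
  obtain ⟨m, hmv, hmw⟩ : ∃ m : C, (olt v w → ¬ olt m v ∧ olt m w) ∧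
      (olt w v → ¬ olt m w ∧ olt m v) := by
    rcases olt_tri hC v w with h | h | h
    · exact ⟨v, fun _ => ⟨olt_irrefl hC _, h⟩, fun h' => (olt_irrefl hC _ (olt_trans hC h h')).elim⟩
    · exact (hne h).elim
    · exact ⟨w, fun h' => (olt_irrefl hC _ (olt_trans hC h h')).elim, fun _ => ⟨olt_irrefl hC _, h⟩⟩
  let A' := cutExt A fun a => olt m (iAC a)
  let C' := cutExt C fun c => olt m c
  have hA' : A' ∈ finLinOrders.{w} := cutExt_mem hA _ fun x y h h' =>
    olt_trans hC h' ((emb_olt iAC x y).2 h)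
  have hC' : C' ∈ finLinOrders.{w} := cutExt_mem hC _ fun x y h h' => olt_trans hC h' h
  let iAA' : A ↪[Language.order] A' := mkEmb hA hA' some fun _ _ => Iff.rfl
  let iCC' : C ↪[Language.order] C' := mkEmb hC hC' some fun _ _ => Iff.rfl
  let iA'C' : A' ↪[Language.order] C' := mkEmb hA' hC' (Option.map iAC) (by
    rintro (_ | x) (_ | y)
    · exact Iff.rfl
    · exact Iff.rfl
    · exact Iff.rfl
    · exact emb_olt iAC x y)
  refine ⟨A', C', hA', hC', iAA', iA'C', iCC', rfl, ?_, ⟨?_, ?_, ?_, ?_⟩, ?_⟩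
  · ext d
    constructor
    · rintro ⟨⟨_ | a, rfl⟩, ⟨c, hc⟩⟩
      · exact nomatch hc
      · exact ⟨a, rfl⟩
    · rintro ⟨a, rfl⟩
      exact ⟨⟨some a, rfl⟩, ⟨iAC a, rfl⟩⟩
  · exact fun h => hne (iCC'.injective h)
  · rintro ⟨_ | a, h⟩
    · exact nomatch h
    · exact hv ⟨a, Option.some.inj h⟩
  · rintro ⟨_ | a, h⟩
    · exact nomatch h
    · exact hw ⟨a, Option.some.inj h⟩
  · rintro (_ | c)
    · exact Or.inr (Or.inr ⟨none, rfl⟩)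
    · rcases hcov c with rfl | rfl | ⟨a, rfl⟩
      · exact Or.inl rfl
      · exact Or.inr (Or.inl rfl)
      · exact Or.inr (Or.inr ⟨some a, rfl⟩)
  intro B hB iA'B Bσ hBσ jσ vσ _ qσ Bτ hBτ jτ wτ hτ qτ D hD iBD v'' _ qD
  obtain ⟨E, hE, r, s, hrs, hint, hE'⟩ := amalg hD hBτ iBD jτ
  have hrs' : ∀ b, r (iBD b) = s (jτ b) := fun b => DFunLike.congr_fun hrs b
  refine ⟨E, hE, r, s wτ, ⟨?_, fun e => ?_⟩, ?_, ?_⟩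
  · intro h
    have h' : s wτ ∈ Set.range ⇑(r.comp iBD) := hint ▸ ⟨h, ⟨wτ, rfl⟩⟩
    obtain ⟨b, hb⟩ := h'
    exact hτ.1 ⟨b, s.injective ((hrs' b).symm.trans hb)⟩
  · rcases hE' e with h | ⟨c, hc, rfl⟩
    · exact Or.inr h
    · rcases hτ.2 c with rfl | h
      · exact Or.inl rfl
      · exact (hc h).elim
  · intro n R t
    rw [← s.map_rel]
    refine iff_of_eq (congrArg _ (funext fun i => ?_))
    change (t i).elim _ _ = s ((t i).elim _ _)
    rcases t i with _ | b
    · rfl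
    · exact hrs' b
  -- Over all of `A'`, the new points of `E` have the same order type as `v` and `w` in `C'`.
  have kv : ∀ a : A', (olt (r (iBD (iA'B a))) (r v'') ↔ olt (iA'C' a) (iCC' v)) ∧
      (olt (r v'') (r (iBD (iA'B a))) ↔ olt (iCC' v) (iA'C' a)) := fun a => by
    have h1 := qf1_olt qD (iA'B a)
    have h2 := qf1_olt qσ a
    rw [emb_olt, emb_olt]
    exact ⟨h1.1.trans h2.1, h1.2.trans h2.2⟩
  have kw : ∀ a : A', (olt (r (iBD (iA'B a))) (s wτ) ↔ olt (iA'C' a) (iCC' w)) ∧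
      (olt (s wτ) (r (iBD (iA'B a))) ↔ olt (iCC' w) (iA'C' a)) := fun a => by
    rw [hrs', emb_olt, emb_olt]
    exact qf1_olt qτ a
  -- The separating point `none` of `A'` decides the order between the two new points.
  have k1 : olt v w → olt (r v'') (s wτ) := fun h =>
    olt_trans hE ((kv none).2.2 (hmv h).1) ((kw none).1.2 (hmv h).2)
  have k2 : olt w v → olt (s wτ) (r v'') := fun h =>
    olt_trans hE ((kw none).2.2 (hmw h).1) ((kv none).1.2 (hmw h).2)
  have asE : ∀ x y : E, olt x y → ¬ olt y x := fun x y h h' =>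
    olt_irrefl hE _ (olt_trans hE h h')
  have asE' := asE (r v'') (s wτ)
  have tri := olt_tri hC v w
  have k3 : olt (r v'') (s wτ) ↔ olt v w := by tauto
  have k4 : olt (s wτ) (r v'') ↔ olt w v := by tauto
  intro n
  refine qf2_of_olt (f := ((r.comp iBD).comp iA'B).comp iAA') (g := iAC) (v := r v'') (w := s wτ)
    (v' := v) (w' := w) (fun a => ?_) (fun a => ?_) k3 k4
    (iff_of_false (olt_irrefl hE _) (olt_irrefl hC _))
    (iff_of_false (olt_irrefl hE _) (olt_irrefl hC _))
  · exact kv (some a)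
  · exact kw (some a)
end

section
/- The class of finite bipartite graphs — finite structures in the language with two unary relation symbols U₀, U₁ and one binary relation symbol E, in which every vertex satisfies exactly one of U₀, U₁, the relation E is symmetric and irreflexive, and E holds only between a U₀-vertex and a U₁-vertex — satisfies the Substructure Free Amalgamation Property (SFAP). -/
/-!
Both halves of SFAP are verified on explicit graphs.

*Free amalgamation.* The disjoint amalgam of `B` and `C` over `A` is realized on
`B ⊕ {c ∈ C | c ∉ A}` (`exists_pushout`), and a vertex or a pair of vertices satisfies a relation
exactly when it does so in `B` or in `C` (`fap`). Vertices in the overlap have the same part in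
`B` and in `C`, since both parts are inherited from `A`, so the result is bipartite.

*The one-point extension.* `E` is `Option D`, with `none` as the new vertex `w'`. It lies in the
part prescribed by `τ`, is joined to the `B`-vertices prescribed by `τ`, and is joined to `v'`
exactly when `v` and `w` are joined in `C`. If that happens, `v` and `w` lie in opposite parts;
the part of `v'` is that of `v` because `σ` restricts to the type of `v` over `A`, and the part of
`w'` is that of `w` because `τ` restricts to the type of `w` over `A`. Hence the extra edge joins
opposite parts.

Since the language is at most binary, equality of quantifier-free types comes down to the three
predicates `BipU0`, `BipU1`, `BipE` (`qf1Eq_iff`, `qf2Eq_intro`).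
-/

open FirstOrder FirstOrder.Language FirstOrder.Language.Structure CategoryTheory

universe u v w

/-- The relation symbols of the language of bipartite graphs: two unary symbols `U₀`, `U₁`
and one binary symbol `E`. -/
inductive BipRel : ℕ → Type
  | U0 : BipRel 1
  | U1 : BipRel 1
  | E : BipRel 2

/-- The language of bipartite graphs. -/
def bipLang : FirstOrder.Language := ⟨fun _ => Empty, BipRel⟩

section

open FirstOrder.Language.Structure

variable {N : Type*} [bipLang.Structure N]

/-- `v` lies in part `0`. -/
def BipU0 (v : N) : Prop := RelMap (L := bipLang) BipRel.U0 ![v]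

/-- `v` lies in part `1`. -/
def BipU1 (v : N) : Prop := RelMap (L := bipLang) BipRel.U1 ![v]

/-- `v` and `w` are adjacent. -/
def BipE (v w : N) : Prop := RelMap (L := bipLang) BipRel.E ![v, w]

end

/-- The class of all finite bipartite graphs: every vertex satisfies exactly one of `U₀`, `U₁`,
the edge relation is symmetric and irreflexive, and edges only join a `U₀`-vertex to a
`U₁`-vertex. -/
def finBipartiteGraphs : Set (CategoryTheory.Bundled bipLang.Structure) :=
  { N | Finite N ∧
        (∀ v : N, (BipU0 v ∨ BipU1 v) ∧ ¬ (BipU0 v ∧ BipU1 v)) ∧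
        (∀ v w : N, BipE v w → BipE w v) ∧
        (∀ v : N, ¬ BipE v v) ∧
        (∀ v w : N, BipE v w → ((BipU0 v ∧ BipU1 w) ∨ (BipU1 v ∧ BipU0 w))) }

namespace Bip

/-! ### Relations of the language in terms of the three predicates -/

section Basic

variable {M N A : Type*} [bipLang.Structure M] [bipLang.Structure N] [bipLang.Structure A]

lemma relMap_U0 (t : Fin 1 → M) : RelMap (L := bipLang) BipRel.U0 t ↔ BipU0 (t 0) := by
  rw [BipU0, show t = ![t 0] by ext i; fin_cases i; rfl]; rfl

lemma relMap_U1 (t : Fin 1 → M) : RelMap (L := bipLang) BipRel.U1 t ↔ BipU1 (t 0) := by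
  rw [BipU1, show t = ![t 0] by ext i; fin_cases i; rfl]; rfl

lemma relMap_E (t : Fin 2 → M) : RelMap (L := bipLang) BipRel.E t ↔ BipE (t 0) (t 1) := by
  rw [BipE, show t = ![t 0, t 1] by ext i; fin_cases i <;> rfl]; rfl

lemma emb_U0 (f : M ↪[bipLang] N) (a : M) : BipU0 (f a) ↔ BipU0 a := by
  have := f.map_rel (BipRel.U0 : bipLang.Relations 1) ![a]
  rw [relMap_U0, relMap_U0] at this
  exact this

lemma emb_U1 (f : M ↪[bipLang] N) (a : M) : BipU1 (f a) ↔ BipU1 a := by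
  have := f.map_rel (BipRel.U1 : bipLang.Relations 1) ![a]
  rw [relMap_U1, relMap_U1] at this
  exact this

lemma emb_E (f : M ↪[bipLang] N) (a b : M) : BipE (f a) (f b) ↔ BipE a b := by
  have := f.map_rel (BipRel.E : bipLang.Relations 2) ![a, b]
  rw [relMap_E, relMap_E] at this
  exact this

/-- An injection preserving and reflecting the three predicates, as an embedding. -/
def mkEmb (f : M → N) (hf : Function.Injective f) (h0 : ∀ a, BipU0 (f a) ↔ BipU0 a)
    (h1 : ∀ a, BipU1 (f a) ↔ BipU1 a) (h2 : ∀ a b, BipE (f a) (f b) ↔ BipE a b) :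
    M ↪[bipLang] N where
  toFun := f
  inj' := hf
  map_fun' := fun F => nomatch F
  map_rel' := by
    intro n R
    cases R with
    | U0 => intro x; exact (relMap_U0 _).trans ((h0 _).trans (relMap_U0 _).symm)
    | U1 => intro x; exact (relMap_U1 _).trans ((h1 _).trans (relMap_U1 _).symm)
    | E => intro x; exact (relMap_E _).trans ((h2 _ _).trans (relMap_E _).symm)

/-- Two one-point types over `A` agree iff the parts and the adjacencies agree. -/
lemma qf1Eq_iff (f : A ↪[bipLang] M) (v : M) (g : A ↪[bipLang] N) (u : N) :
    CDP.QF1Eq f v g u ↔ (BipU0 v ↔ BipU0 u) ∧ (BipU1 v ↔ BipU1 u) ∧ (BipE v v ↔ BipE u u) ∧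
      ∀ a, (BipE (f a) v ↔ BipE (g a) u) ∧ (BipE v (f a) ↔ BipE u (g a)) := by
  constructor
  · intro h
    refine ⟨?_, ?_, ?_, fun a => ⟨?_, ?_⟩⟩
    · exact (relMap_U0 _).symm.trans ((h BipRel.U0 ![none]).trans (relMap_U0 _))
    · exact (relMap_U1 _).symm.trans ((h BipRel.U1 ![none]).trans (relMap_U1 _))
    · exact (relMap_E _).symm.trans ((h BipRel.E ![none, none]).trans (relMap_E _))
    · exact (relMap_E _).symm.trans ((h BipRel.E ![some a, none]).trans (relMap_E _))
    · exact (relMap_E _).symm.trans ((h BipRel.E ![none, some a]).trans (relMap_E _))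
  · rintro ⟨h0, h1, h2, h3⟩ n R
    cases R
    · intro t
      rw [relMap_U0, relMap_U0]
      cases t 0 with
      | none => exact h0
      | some a => exact (emb_U0 f a).trans (emb_U0 g a).symm
    · intro t
      rw [relMap_U1, relMap_U1]
      cases t 0 with
      | none => exact h1
      | some a => exact (emb_U1 f a).trans (emb_U1 g a).symm
    · intro t
      rw [relMap_E, relMap_E]
      cases t 0 with
      | none =>
        cases t 1 with
        | none => exact h2
        | some a => exact (h3 a).2
      | some a =>
        cases t 1 with
        | none => exact (h3 a).1
        | some b => exact (emb_E f a b).trans (emb_E g a b).symm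

/-- Two-point types over `A` agree as soon as both one-point types agree and the two new points
are joined in the same way. -/
lemma qf2Eq_intro (f : A ↪[bipLang] M) (v w : M) (g : A ↪[bipLang] N) (v' w' : N)
    (hv : CDP.QF1Eq f v g v') (hw : CDP.QF1Eq f w g w')
    (h : BipE v w ↔ BipE v' w') (h' : BipE w v ↔ BipE w' v') :
    CDP.QF2Eq f v w g v' w' := by
  rw [qf1Eq_iff] at hv hw
  obtain ⟨v0, v1, v2, v3⟩ := hv
  obtain ⟨w0, w1, w2, w3⟩ := hw
  intro n R
  cases R
  · intro t
    rw [relMap_U0, relMap_U0]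
    rcases t 0 with a | i
    · exact (emb_U0 f a).trans (emb_U0 g a).symm
    · fin_cases i
      exacts [v0, w0]
  · intro t
    rw [relMap_U1, relMap_U1]
    rcases t 0 with a | i
    · exact (emb_U1 f a).trans (emb_U1 g a).symm
    · fin_cases i
      exacts [v1, w1]
  · intro t
    rw [relMap_E, relMap_E]
    rcases t 0 with a | i <;> rcases t 1 with b | j
    · exact (emb_E f a b).trans (emb_E g a b).symm
    · fin_cases j
      exacts [(v3 a).1, (w3 a).1]
    · fin_cases i
      exacts [(v3 b).2, (w3 b).2]
    · fin_cases i <;> fin_cases j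
      exacts [v2, h, h', w2]

end Basic

/-- The `bipLang`-structure on `M` with the given parts and adjacency. -/
abbrev mkStr {M : Type*} (u0 u1 : M → Prop) (e : M → M → Prop) : bipLang.Structure M where
  funMap := fun F => nomatch F
  RelMap := fun {_} R t =>
    match R, t with
    | BipRel.U0, t => u0 (t 0)
    | BipRel.U1, t => u1 (t 0)
    | BipRel.E, t => e (t 0) (t 1)

/-! ### Free amalgamation -/

/-- Pushout of two injections of sets: jointly surjective injections `r`, `s` whose images meet
only in the image of `A`. -/
lemma exists_pushout {A B C : Type w} [Finite B] [Finite C] (f : A → B) (g : A → C)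
    (hf : Function.Injective f) (hg : Function.Injective g) :
    ∃ (D : Type w) (r : B → D) (s : C → D), Finite D ∧ Function.Injective r ∧
      Function.Injective s ∧ (∀ d, (∃ b, r b = d) ∨ ∃ c, s c = d) ∧
      ∀ b c, r b = s c ↔ ∃ a, f a = b ∧ g a = c := by
  classical
  let s : C → B ⊕ {c : C // ¬ ∃ a, g a = c} := fun c =>
    if h : ∃ a, g a = c then Sum.inl (f h.choose) else Sum.inr ⟨c, h⟩
  have s1 : ∀ a, s (g a) = Sum.inl (f a) := by
    intro a
    have h : ∃ a', g a' = g a := ⟨a, rfl⟩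
    have : s (g a) = Sum.inl (f h.choose) := dif_pos h
    rw [this, hg h.choose_spec]
  have s2 : ∀ c (h : ¬ ∃ a, g a = c), s c = Sum.inr ⟨c, h⟩ := fun c h => dif_neg h
  refine ⟨_, Sum.inl, s, inferInstance, Sum.inl_injective, ?_, ?_, ?_⟩
  · intro c c' h
    by_cases hc : ∃ a, g a = c <;> by_cases hc' : ∃ a, g a = c'
    · obtain ⟨a, rfl⟩ := hc
      obtain ⟨a', rfl⟩ := hc'
      rw [s1, s1] at h
      rw [hf (Sum.inl_injective h)]
    · obtain ⟨a, rfl⟩ := hc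
      rw [s1, s2 _ hc'] at h
      cases h
    · obtain ⟨a, rfl⟩ := hc'
      rw [s1, s2 _ hc] at h
      cases h
    · rw [s2 _ hc, s2 _ hc'] at h
      cases h
      rfl
  · rintro (b | ⟨c, hc⟩)
    · exact Or.inl ⟨b, rfl⟩
    · exact Or.inr ⟨c, s2 c hc⟩
  · intro b c
    constructor
    · intro h
      by_cases hc : ∃ a, g a = c
      · obtain ⟨a, rfl⟩ := hc
        rw [s1] at h
        exact ⟨a, (Sum.inl_injective h).symm, rfl⟩
      · rw [s2 _ hc] at h
        cases h
    · rintro ⟨a, rfl, rfl⟩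
      exact (s1 a).symm

lemma fap : CDP.FAP.{0, 0, w} finBipartiteGraphs := by
  rintro A B C - ⟨Bfin, Bpart, Bsymm, Birr, Bbip⟩ ⟨Cfin, Cpart, Csymm, Cirr, Cbip⟩ f g
  obtain ⟨D, r, s, Dfin, r_inj, s_inj, surj, glue⟩ :=
    exists_pushout (f : A → B) (g : A → C) f.injective g.injective
  let strD : bipLang.Structure D := mkStr
    (fun d => (∃ b, r b = d ∧ BipU0 b) ∨ ∃ c, s c = d ∧ BipU0 c)
    (fun d => (∃ b, r b = d ∧ BipU1 b) ∨ ∃ c, s c = d ∧ BipU1 c)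
    (fun d d' => (∃ b b', r b = d ∧ r b' = d' ∧ BipE b b') ∨
      ∃ c c', s c = d ∧ s c' = d' ∧ BipE c c')
  have D0 : ∀ d : D, BipU0 d ↔ (∃ b, r b = d ∧ BipU0 b) ∨ ∃ c, s c = d ∧ BipU0 c :=
    fun _ => Iff.rfl
  have D1 : ∀ d : D, BipU1 d ↔ (∃ b, r b = d ∧ BipU1 b) ∨ ∃ c, s c = d ∧ BipU1 c :=
    fun _ => Iff.rfl
  have DE : ∀ d d' : D, BipE d d' ↔ (∃ b b', r b = d ∧ r b' = d' ∧ BipE b b') ∨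
      ∃ c c', s c = d ∧ s c' = d' ∧ BipE c c' :=
    fun _ _ => Iff.rfl
  have r0 : ∀ b, BipU0 (r b) ↔ BipU0 b := by
    intro b
    rw [D0]
    constructor
    · rintro (⟨b', h, hb⟩ | ⟨c, h, hc⟩)
      · rwa [← r_inj h]
      · obtain ⟨a, rfl, rfl⟩ := (glue b c).1 h.symm
        rwa [emb_U0] at hc ⊢
    · exact fun h => Or.inl ⟨b, rfl, h⟩
  have r1 : ∀ b, BipU1 (r b) ↔ BipU1 b := by
    intro b
    rw [D1]
    constructor
    · rintro (⟨b', h, hb⟩ | ⟨c, h, hc⟩)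
      · rwa [← r_inj h]
      · obtain ⟨a, rfl, rfl⟩ := (glue b c).1 h.symm
        rwa [emb_U1] at hc ⊢
    · exact fun h => Or.inl ⟨b, rfl, h⟩
  have s0 : ∀ c, BipU0 (s c) ↔ BipU0 c := by
    intro c
    rw [D0]
    constructor
    · rintro (⟨b, h, hb⟩ | ⟨c', h, hc⟩)
      · obtain ⟨a, rfl, rfl⟩ := (glue b c).1 h
        rwa [emb_U0] at hb ⊢
      · rwa [← s_inj h]
    · exact fun h => Or.inr ⟨c, rfl, h⟩
  have s1 : ∀ c, BipU1 (s c) ↔ BipU1 c := by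
    intro c
    rw [D1]
    constructor
    · rintro (⟨b, h, hb⟩ | ⟨c', h, hc⟩)
      · obtain ⟨a, rfl, rfl⟩ := (glue b c).1 h
        rwa [emb_U1] at hb ⊢
      · rwa [← s_inj h]
    · exact fun h => Or.inr ⟨c, rfl, h⟩
  have rE : ∀ b b', BipE (r b) (r b') ↔ BipE b b' := by
    intro b b'
    rw [DE]
    constructor
    · rintro (⟨x, y, h, h', e⟩ | ⟨x, y, h, h', e⟩)
      · rwa [← r_inj h, ← r_inj h']
      · obtain ⟨a, rfl, rfl⟩ := (glue _ _).1 h.symm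
        obtain ⟨a', rfl, rfl⟩ := (glue _ _).1 h'.symm
        rwa [emb_E] at e ⊢
    · exact fun h => Or.inl ⟨b, b', rfl, rfl, h⟩
  have sE : ∀ c c', BipE (s c) (s c') ↔ BipE c c' := by
    intro c c'
    rw [DE]
    constructor
    · rintro (⟨x, y, h, h', e⟩ | ⟨x, y, h, h', e⟩)
      · obtain ⟨a, rfl, rfl⟩ := (glue _ _).1 h
        obtain ⟨a', rfl, rfl⟩ := (glue _ _).1 h'
        rwa [emb_E] at e ⊢
      · rwa [← s_inj h, ← s_inj h']
    · exact fun h => Or.inr ⟨c, c', rfl, rfl, h⟩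
  have rs : ∀ a, r (f a) = s (g a) := fun a => (glue _ _).2 ⟨a, rfl, rfl⟩
  refine ⟨⟨D, strD⟩, ⟨Dfin, ?_, ?_, ?_, ?_⟩, mkEmb r r_inj r0 r1 rE, mkEmb s s_inj s0 s1 sE,
    ?_, ?_, ?_⟩
  · intro d
    rcases surj d with ⟨b, rfl⟩ | ⟨c, rfl⟩
    · rw [r0, r1]
      exact Bpart b
    · rw [s0, s1]
      exact Cpart c
  · intro d d' h
    rcases (DE d d').1 h with ⟨x, y, rfl, rfl, e⟩ | ⟨x, y, rfl, rfl, e⟩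
    · exact (rE _ _).2 (Bsymm _ _ e)
    · exact (sE _ _).2 (Csymm _ _ e)
  · intro d h
    rcases surj d with ⟨b, rfl⟩ | ⟨c, rfl⟩
    · exact Birr b ((rE _ _).1 h)
    · exact Cirr c ((sE _ _).1 h)
  · intro d d' h
    rcases (DE d d').1 h with ⟨x, y, rfl, rfl, e⟩ | ⟨x, y, rfl, rfl, e⟩
    · rw [r0, r1, r0, r1]
      exact Bbip _ _ e
    · rw [s0, s1, s0, s1]
      exact Cbip _ _ e
  · ext a
    exact rs a
  · ext d
    constructor
    · rintro ⟨⟨b, rfl⟩, ⟨c, h⟩⟩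
      obtain ⟨a, rfl, rfl⟩ := (glue b c).1 h.symm
      exact ⟨a, rfl⟩
    · rintro ⟨a, rfl⟩
      exact ⟨⟨f a, rfl⟩, ⟨g a, (rs a).symm⟩⟩
  · -- A point of `r(B)` outside the overlap is not in `s(C)`, and conversely.
    have hr : ∀ (b : B) (c : C), r b = s c → ∃ a, r (f a) = r b := by
      intro b c h
      obtain ⟨a, rfl, -⟩ := (glue b c).1 h
      exact ⟨a, rfl⟩
    have hs : ∀ (b : B) (c : C), r b = s c → ∃ a, s (g a) = s c := by
      intro b c h
      obtain ⟨a, -, rfl⟩ := (glue b c).1 h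
      exact ⟨a, rfl⟩
    have key : ∀ {n : ℕ} (R : bipLang.Relations n) (t : Fin n → D), RelMap R t →
        (∀ i, ∃ b, r b = t i) ∨ ∀ i, ∃ c, s c = t i := by
      intro n R
      cases R
      · intro t _
        simp only [Fin.forall_fin_one]
        exact surj _
      · intro t _
        simp only [Fin.forall_fin_one]
        exact surj _
      · intro t ht
        simp only [Fin.forall_fin_two]
        rcases (DE _ _).1 ((relMap_E t).1 ht) with ⟨x, y, h, h', -⟩ | ⟨x, y, h, h', -⟩
        · exact Or.inl ⟨⟨x, h⟩, y, h'⟩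
        · exact Or.inr ⟨⟨x, h⟩, y, h'⟩
    rintro n R t ht ⟨⟨i, ⟨b, hb⟩, hi⟩, ⟨j, ⟨c, hc⟩, hj⟩⟩
    rcases key R t ht with h | h
    · obtain ⟨b', hb'⟩ := h j
      obtain ⟨a, ha⟩ := hs b' c (hb'.trans hc.symm)
      exact hj ⟨a, ha.trans hc⟩
    · obtain ⟨c', hc'⟩ := h i
      obtain ⟨a, ha⟩ := hr b c' (Eq.trans hb hc'.symm)
      exact hi ⟨a, ha.trans hb⟩

end Bip

/-- The class of finite bipartite graphs satisfies SFAP. -/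
theorem finBipartiteGraphs_sfap : CDP.SFAP finBipartiteGraphs := by
  refine ⟨Bip.fap, ?_⟩
  rintro A C - ⟨-, -, Csymm, Cirr, Cbip⟩ iAC v w - B - iAB Bσ - jσ vσ - hσ
    Bτ ⟨-, τpart, τsymm, τirr, τbip⟩ jτ wτ - hτ D ⟨Dfin, Dpart, Dsymm, Dirr, Dbip⟩ iBD v'
    ⟨hv', hD⟩ hDσ
  have hσ' := (Bip.qf1Eq_iff _ _ _ _).1 hσ
  have hτ' := (Bip.qf1Eq_iff _ _ _ _).1 hτ
  have hDσ' := (Bip.qf1Eq_iff _ _ _ _).1 hDσ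
  -- `P d`: the vertex `d` of `D` is to be joined to the new vertex.
  let P : D → Prop := fun d => (∃ b, iBD b = d ∧ BipE (jτ b) wτ) ∨ (d = v' ∧ BipE v w)
  have PB : ∀ b, P (iBD b) ↔ BipE (jτ b) wτ := by
    intro b
    constructor
    · rintro (⟨b', h, e⟩ | ⟨h, -⟩)
      · rwa [← iBD.injective h]
      · exact absurd ⟨b, h⟩ hv'
    · exact fun h => Or.inl ⟨b, rfl, h⟩
  have Pv : P v' ↔ BipE v w := by
    constructor
    · rintro (⟨b, h, -⟩ | ⟨-, e⟩)
      · exact absurd ⟨b, h⟩ hv'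
      · exact e
    · exact fun h => Or.inr ⟨rfl, h⟩
  have v0 : BipU0 v' ↔ BipU0 v := hDσ'.1.trans hσ'.1
  have v1 : BipU1 v' ↔ BipU1 v := hDσ'.2.1.trans hσ'.2.1
  have Pbip : ∀ d, P d → (BipU0 d ∧ BipU1 wτ) ∨ (BipU1 d ∧ BipU0 wτ) := by
    rintro d (⟨b, rfl, e⟩ | ⟨rfl, e⟩)
    · rw [Bip.emb_U0, Bip.emb_U1, ← Bip.emb_U0 jτ, ← Bip.emb_U1 jτ]
      exact τbip _ _ e
    · rw [v0, v1, hτ'.1, hτ'.2.1]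
      exact Cbip _ _ e
  let strE : bipLang.Structure (Option D) := Bip.mkStr
    (fun x => x.elim (BipU0 wτ) BipU0)
    (fun x => x.elim (BipU1 wτ) BipU1)
    (fun x y => x.elim (y.elim False P) (fun d => y.elim (P d) (BipE d)))
  have snone : ∀ d : D, BipE (some d) (none : Option D) ↔ P d := fun _ => Iff.rfl
  have nsome : ∀ d : D, BipE (none : Option D) (some d) ↔ P d := fun _ => Iff.rfl
  have nnone : ¬ BipE (none : Option D) none := id
  have ssome : ∀ d d' : D, BipE (some d) (some d') ↔ BipE d d' := fun _ _ => Iff.rfl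
  let iDE : D ↪[bipLang] Option D := Bip.mkEmb some (Option.some_injective D)
    (fun _ => Iff.rfl) (fun _ => Iff.rfl) (fun _ _ => Iff.rfl)
  have symC : BipE w v ↔ BipE v w := ⟨Csymm _ _, Csymm _ _⟩
  have symτ : ∀ x y : Bτ, BipE x y ↔ BipE y x := fun _ _ => ⟨τsymm _ _, τsymm _ _⟩
  have hEτ : CDP.QF1Eq (iDE.comp iBD) none jτ wτ := by
    rw [Bip.qf1Eq_iff]
    refine ⟨Iff.rfl, Iff.rfl, iff_of_false nnone (τirr _), fun b => ⟨PB b, ?_⟩⟩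
    rw [symτ]
    exact PB b
  refine ⟨⟨Option D, strE⟩, ⟨?_, ?_, ?_, ?_, ?_⟩, iDE, none, ⟨?_, ?_⟩, hEτ, ?_, ?_⟩
  · exact inferInstanceAs (Finite (Option D))
  · rintro (_ | d)
    exacts [τpart wτ, Dpart d]
  · rintro (_ | d) (_ | d') h
    exacts [h, h, h, Dsymm _ _ h]
  · rintro (_ | d) h
    exacts [h, Dirr _ h]
  · rintro (_ | d) (_ | d') h
    · exact absurd h nnone
    · rcases Pbip d' h with ⟨a, b⟩ | ⟨a, b⟩
      exacts [Or.inr ⟨b, a⟩, Or.inl ⟨b, a⟩]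
    · exact Pbip d h
    · exact Dbip d d' h
  · rintro ⟨d, h⟩
    cases h
  · rintro (_ | d)
    exacts [Or.inl rfl, Or.inr ⟨d, rfl⟩]
  · refine Bip.qf2Eq_intro _ _ _ _ _ _ ?_ ?_ ?_ ?_
    · rw [Bip.qf1Eq_iff]
      exact ⟨v0, v1, iff_of_false (Dirr v') (Cirr v), fun a =>
        ⟨(hDσ'.2.2.2 (iAB a)).1.trans (hσ'.2.2.2 a).1,
          (hDσ'.2.2.2 (iAB a)).2.trans (hσ'.2.2.2 a).2⟩⟩
    · rw [Bip.qf1Eq_iff]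
      exact ⟨hτ'.1, hτ'.2.1, iff_of_false nnone (Cirr w), fun a =>
        ⟨(PB (iAB a)).trans (hτ'.2.2.2 a).1,
          (PB (iAB a)).trans ((symτ _ _).trans (hτ'.2.2.2 a).2)⟩⟩
    · exact Pv
    · exact Iff.trans Pv symC.symm
  · -- Only edges between `none` and some `d` are not already in `D`; then `P d` holds, and each
    -- of its two cases places the edge over `B` or over `A ∪ {v'}`.
    have hP : ∀ d, P d → some d ∈ Set.range (iDE.comp iBD) ∨ some d = iDE v' := by
      rintro d (⟨b, rfl, -⟩ | ⟨rfl, -⟩)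
      exacts [Or.inl ⟨b, rfl⟩, Or.inr rfl]
    have hU : ∀ x : Option D, x ∈ Set.range iDE ∨ x = none := by
      rintro (_ | d)
      exacts [Or.inr rfl, Or.inl ⟨d, rfl⟩]
    intro n R
    cases R
    · intro t _
      simp only [Fin.forall_fin_one]
      exact (hU (t 0)).imp id fun h => Or.inl (Or.inl h)
    · intro t _
      simp only [Fin.forall_fin_one]
      exact (hU (t 0)).imp id fun h => Or.inl (Or.inl h)
    · intro t ht
      simp only [Fin.forall_fin_two]
      have ht' := (Bip.relMap_E t).1 ht
      revert ht'
      generalize t 0 = x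
      generalize t 1 = y
      intro h
      rcases x with _ | d <;> rcases y with _ | d'
      · exact absurd h nnone
      · rcases hP d' h with h | h
        exacts [Or.inr (Or.inl ⟨Or.inl rfl, Or.inr h⟩),
          Or.inr (Or.inr ⟨Or.inl rfl, Or.inr (Or.inl h)⟩)]
      · rcases hP d h with h | h
        exacts [Or.inr (Or.inl ⟨Or.inr h, Or.inl rfl⟩),
          Or.inr (Or.inr ⟨Or.inr (Or.inl h), Or.inl rfl⟩)]
      · exact Or.inl ⟨⟨d, rfl⟩, ⟨d', rfl⟩⟩
end

section
/- Let K be a Fraïssé class of finite structures in a finite relational language L satisfying the Substructure Free Amalgamation Property (SFAP), and let K^< be its ordered expansion: the class of all finite structures in the language L ∪ {<} whose L-reduct lies in K and in which < is a strict linear order. Then K^< satisfies the Substructure Disjoint Amalgamation Property (SDAP). -/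
/-!
`K^<` has disjoint amalgamation because a free amalgam of the `L`-reducts can be ordered: the two
finite linear orders are mapped to `ℚ` compatibly over `A`, and remaining ties are broken
arbitrarily (`exists_amalgam_order`, `orderedExpansion_dap`).

For the extension property, the only danger is that SFAP, applied to the reducts, says nothing
about the relative order of the two new vertices `v` and `w`: types over `B` may force
`v'' < w''` although `w < v` in `C`. This is why `A` has to be enlarged. Let `C'` be a one-point
extension of `C` whose new point `a'` lies between `v` and `w`
(`exists_separating_point`; the underlying `L`-structure comes from amalgamating `C` with itself
over `C ∖ {v}`), and let `A' = A ∪ {a'}`. The types of `v` and `w` over `A'` then already say on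
which side of `a'` each vertex lies. Hence, given `D = B ∪ {v''}`, the set of points of `B` that
`τ` places below `w''`, together with `v''` in case `v < w`, is an initial segment of `D`, and
inserting `w''` immediately above it orders the `L`-structure given by SFAP
(`exists_insert`, `sdapWitness_of_separated`). The cuts of a new point determine the order part
of its quantifier-free type (`qf1Eq_of_cut`, `qf2Eq_of_cut`), so all required types agree.
-/

open FirstOrder FirstOrder.Language FirstOrder.Language.Structure CategoryTheory

universe u v w

namespace CDP

/-- The interpretation of the order symbol in a structure for the language `L.sum Language.order`. -/
def OrdRel {L : FirstOrder.Language.{u, v}} {N : Type*}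
    [(L.sum Language.order).Structure N] (a b : N) : Prop :=
  RelMap (L := L.sum Language.order) (Sum.inr leSymb) ![a, b]

/-- The ordered expansion `K^<` of a class `K` of `L`-structures: all structures in the
language `L ∪ {<}` whose `L`-reduct lies in `K` and in which `<` is a strict linear order. -/
def orderedExpansion {L : FirstOrder.Language.{u, v}}
    (K : Set (CategoryTheory.Bundled.{w} L.Structure)) :
    Set (CategoryTheory.Bundled.{w} (L.sum Language.order).Structure) :=
  { N | (⟨N, (FirstOrder.Language.LHom.sumInl : L →ᴸ L.sum Language.order).reduct N⟩ :
          CategoryTheory.Bundled.{w} L.Structure) ∈ K ∧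
        IsStrictTotalOrder N (OrdRel (L := L)) }

end CDP

namespace CDP

variable {L : FirstOrder.Language.{u, v}}

/-! ### Reducts and expansions by an order -/

/-- The `L`-reduct of an `L ∪ {<}`-structure. -/
abbrev red (N : Bundled.{w} (L.sum Language.order).Structure) : Bundled.{w} L.Structure :=
  ⟨N, (FirstOrder.Language.LHom.sumInl : L →ᴸ L.sum Language.order).reduct N⟩

/-- The expansion of an `L`-structure by an arbitrary binary relation interpreting `<`. -/
def expand (E : Bundled.{w} L.Structure) (lt : E → E → Prop) :
    Bundled.{w} (L.sum Language.order).Structure :=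
  ⟨E, letI : Language.order.Structure E :=
        { funMap := fun f => isEmptyElim f
          RelMap := fun R => match R with
            | .le => fun t => lt (t 0) (t 1) }
      Language.sumStructure L Language.order E⟩

lemma expand_mem {K : Set (Bundled.{w} L.Structure)} {E : Bundled.{w} L.Structure}
    {lt : E → E → Prop} (hE : E ∈ K) (hlt : IsStrictTotalOrder E lt) :
    expand E lt ∈ orderedExpansion K :=
  ⟨hE, hlt⟩

lemma ordRel_expand {E : Bundled.{w} L.Structure} {lt : E → E → Prop} (x y : E) :
    OrdRel (L := L) (N := expand E lt) x y ↔ lt x y := Iff.rfl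

/-- An `L ∪ {<}`-embedding, regarded as an embedding of the `L`-reducts. -/
def redEmb {M N : Bundled.{w} (L.sum Language.order).Structure}
    (f : M ↪[L.sum Language.order] N) : red M ↪[L] red N where
  toFun := f
  inj' := f.injective
  map_fun' := fun F x => f.map_fun (Sum.inl F) x
  map_rel' := fun R x => f.map_rel (Sum.inl R) x

/-- Every instance of a relation symbol of the order language is a comparison of two fixed
entries of the tuple. -/
lemma relMap_inr (L : FirstOrder.Language.{u, v}) {n : ℕ} (R : Language.order.Relations n) :
    ∃ i j : Fin n, ∀ {N : Type w} [(L.sum Language.order).Structure N] (t : Fin n → N),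
      RelMap (L := L.sum Language.order) (Sum.inr R) t ↔ OrdRel (L := L) (t i) (t j) := by
  cases R
  refine ⟨0, 1, fun {N} _ t => ?_⟩
  have : t = ![t 0, t 1] := by
    ext i; fin_cases i <;> rfl
  conv_lhs => rw [this]
  rfl

/-- An `L`-embedding of the reducts that preserves and reflects `<` is an
`L ∪ {<}`-embedding. -/
def liftEmb [L.IsRelational] {M N : Bundled.{w} (L.sum Language.order).Structure}
    (f : red M ↪[L] red N)
    (h : ∀ a b : M, OrdRel (L := L) (N := N) (f a) (f b) ↔ OrdRel (L := L) a b) :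
    M ↪[L.sum Language.order] N where
  toFun := f
  inj' := f.injective
  map_fun' := fun F _ => isEmptyElim F
  map_rel' := fun R x => by
    rcases R with R | R
    · exact f.map_rel R x
    · obtain ⟨i, j, hij⟩ := relMap_inr.{u, v, w} L R
      rw [hij, hij]
      exact h _ _

lemma ordRel_map {M N : Type*} [(L.sum Language.order).Structure M]
    [(L.sum Language.order).Structure N] (f : M ↪[L.sum Language.order] N) (a b : M) :
    OrdRel (L := L) (f a) (f b) ↔ OrdRel (L := L) a b := by
  have h := f.map_rel (Sum.inr leSymb : (L.sum Language.order).Relations 2) ![a, b]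
  have : ⇑f ∘ ![a, b] = ![f a, f b] := by ext i; fin_cases i <;> rfl
  rwa [this] at h

/-- In a relational language every subset of a structure is the range of an embedding. -/
lemma exists_emb_range {L' : FirstOrder.Language.{u, v}} [L'.IsRelational]
    (N : Bundled.{w} L'.Structure) (X : Set N) :
    ∃ (M : Bundled.{w} L'.Structure) (i : M ↪[L'] N), Set.range ⇑i = X := by
  let S : L'.Substructure N := ⟨X, fun F => isEmptyElim F⟩
  refine ⟨⟨S, inferInstance⟩, S.subtype, ?_⟩
  ext x
  exact ⟨fun ⟨y, hy⟩ => hy ▸ y.2, fun hx => ⟨⟨x, hx⟩, rfl⟩⟩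

/-- An embedding whose range is contained in that of `i` factors through `i`. -/
lemma exists_factor {L' : FirstOrder.Language.{u, v}} [L'.IsRelational]
    {A M N : Bundled.{w} L'.Structure} (f : A ↪[L'] N) (i : M ↪[L'] N)
    (h : Set.range ⇑f ⊆ Set.range ⇑i) :
    ∃ g : A ↪[L'] M, ∀ a, i (g a) = f a := by
  choose g hg using fun a => h ⟨a, rfl⟩
  refine ⟨⟨⟨g, fun a b hab => f.injective ?_⟩, fun F => isEmptyElim F, fun R x => ?_⟩, hg⟩
  · rw [← hg, ← hg, hab]
  · rw [← f.map_rel, ← i.map_rel]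
    have : ⇑i ∘ g ∘ x = ⇑f ∘ x := funext fun k => hg _
    exact iff_of_eq (congrArg _ this)

lemma orderedExpansion_hereditary {K : Set (Bundled.{w} L.Structure)}
    (hK : IsFraisseClass K) {M N : Bundled.{w} (L.sum Language.order).Structure}
    (hN : N ∈ orderedExpansion K) (i : M ↪[L.sum Language.order] N) :
    M ∈ orderedExpansion K := by
  have := hN.2
  refine ⟨hK.2.2.2.1 _ hN.1 _ ⟨redEmb i⟩, ?_⟩
  exact { irrefl := fun a h => irrefl_of (OrdRel (L := L)) _ ((ordRel_map i a a).2 h)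
          trans := fun a b c h₁ h₂ => (ordRel_map i a c).1
            (trans_of _ ((ordRel_map i a b).2 h₁) ((ordRel_map i b c).2 h₂))
          trichotomous := fun a b h₁ h₂ => i.injective <|
            Std.Trichotomous.trichotomous (r := OrdRel (L := L)) _ _
              (fun h => h₁ ((ordRel_map i a b).1 h)) (fun h => h₂ ((ordRel_map i b a).1 h)) }

end CDP

namespace CDP

/-! ### Amalgamating finite linear orders -/

/-- A partial map to `ℚ` that is strictly increasing on a subset `S` of a finite linear order `β`
extends from `S` to a strictly increasing map on all of `β`; points are added one at a time. -/
lemma exists_strictMono_extend {β : Type*} [LinearOrder β] [Finite β] (S : Set β)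
    (j₀ : β → ℚ) (h₀ : StrictMonoOn j₀ S) :
    ∃ j : β → ℚ, StrictMono j ∧ ∀ x ∈ S, j x = j₀ x := by
  classical
  have := Fintype.ofFinite β
  suffices H : ∀ T : Finset β, ∃ j : β → ℚ, StrictMonoOn j (S ∪ T) ∧ ∀ x ∈ S, j x = j₀ x by
    obtain ⟨j, hj, hj'⟩ := H Finset.univ
    exact ⟨j, fun a b hab => hj (by simp) (by simp) hab, hj'⟩
  intro T
  induction T using Finset.induction_on with
  | empty => exact ⟨j₀, by simpa using h₀, fun _ _ => rfl⟩
  | insert c T _ ih =>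
    obtain ⟨j, hj, hj'⟩ := ih
    by_cases hc : c ∈ S ∪ (T : Set β)
    · refine ⟨j, ?_, hj'⟩
      rwa [Finset.coe_insert, Set.union_insert, Set.insert_eq_of_mem hc]
    let P := Finset.univ.filter (fun x => x ∈ S ∪ (T : Set β))
    -- the value at the new point must separate the images of the points below and above it
    obtain ⟨m, hlo, hhi⟩ := Order.exists_between_finsets
      ((P.filter (· < c)).image j) ((P.filter (c < ·)).image j) (by
        simp only [P, Finset.mem_image, Finset.mem_filter, Finset.mem_univ, true_and]
        rintro _ ⟨x, ⟨hx, hxc⟩, rfl⟩ _ ⟨y, ⟨hy, hyc⟩, rfl⟩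
        exact hj hx hy (hxc.trans hyc))
    have hlo' : ∀ x ∈ S ∪ (T : Set β), x < c → j x < m := fun x hx hxc =>
      hlo _ (Finset.mem_image_of_mem _ (by simpa [P, hxc] using hx))
    have hhi' : ∀ x ∈ S ∪ (T : Set β), c < x → m < j x := fun x hx hxc =>
      hhi _ (Finset.mem_image_of_mem _ (by simpa [P, hxc] using hx))
    have hne : ∀ x ∈ S ∪ (T : Set β), x ≠ c := fun x hx h => hc (h ▸ hx)
    refine ⟨Function.update j c m, ?_, fun x hx => ?_⟩
    · rw [Finset.coe_insert, Set.union_insert]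
      rintro x (rfl | hx) y (rfl | hy) hxy
      · exact absurd hxy (lt_irrefl _)
      · simpa [hne y hy] using hhi' y hy hxy
      · simpa [hne x hx] using hlo' x hx hxy
      · simpa [hne x hx, hne y hy] using hj hx hy hxy
    · rw [Function.update_of_ne (hne x (Or.inl hx)), hj' x hx]

/-- Disjoint amalgamation of finite linear orders, on a prescribed underlying set `D`. Both
orders are mapped to `ℚ` compatibly over `A`, and points of `D` with equal image (necessarily
coming from different sides) are compared by an arbitrary well-ordering. -/
lemma exists_amalgam_order {A B C D : Type*} {ltB : B → B → Prop} {ltC : C → C → Prop}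
    (hB : IsStrictTotalOrder B ltB) (hC : IsStrictTotalOrder C ltC) [Finite B] [Finite C]
    {f : A → B} {g : A → C} (hg : g.Injective) (hfg : ∀ a b, ltB (f a) (f b) ↔ ltC (g a) (g b))
    {r : B → D} {s : C → D} (hr : r.Injective) (hs : s.Injective)
    (hrs : ∀ a, r (f a) = s (g a))
    (hdis : ∀ b c, r b = s c → ∃ a, b = f a) :
    ∃ lt : D → D → Prop, IsStrictTotalOrder D lt ∧
      (∀ b b', lt (r b) (r b') ↔ ltB b b') ∧ (∀ c c', lt (s c) (s c') ↔ ltC c c') := by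
  classical
  let _ : LinearOrder B := linearOrderOfSTO ltB
  let _ : LinearOrder C := linearOrderOfSTO ltC
  have hBlt : ∀ b b' : B, b < b' ↔ ltB b b' := fun _ _ => Iff.rfl
  have hClt : ∀ b b' : C, b < b' ↔ ltC b b' := fun _ _ => Iff.rfl
  obtain ⟨i, hi, -⟩ := exists_strictMono_extend (∅ : Set B) (fun _ => 0) (by simp [StrictMonoOn])
  obtain ⟨j, hj, hj'⟩ := exists_strictMono_extend (Set.range g)
    (Function.extend g (i ∘ f) 0) (by
      rintro _ ⟨a, rfl⟩ _ ⟨b, rfl⟩ hab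
      rw [hg.extend_apply, hg.extend_apply]
      exact hi ((hBlt _ _).2 ((hfg a b).2 ((hClt _ _).1 hab))))
  let h : D → ℚ := Function.extend r i (Function.extend s j 0)
  have hrh : ∀ b, h (r b) = i b := fun b => hr.extend_apply _ _ _
  have hsh : ∀ c, h (s c) = j c := by
    intro c
    by_cases hc : ∃ b, r b = s c
    · obtain ⟨b, hb⟩ := hc
      obtain ⟨a, rfl⟩ := hdis b c hb
      obtain rfl : g a = c := hs ((hrs a).symm.trans hb)
      rw [← hb, hrh, hj' _ ⟨a, rfl⟩, hg.extend_apply, Function.comp]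
    · simp only [h]
      rw [Function.extend_apply' _ _ _ hc, hs.extend_apply]
  let lt : D → D → Prop := fun x y => h x < h y ∨ h x = h y ∧ WellOrderingRel x y
  refine ⟨lt, ?_, fun b b' => ?_, fun c c' => ?_⟩
  · exact
      { irrefl := by
          rintro a (h | ⟨-, h⟩)
          · exact lt_irrefl _ h
          · exact irrefl_of WellOrderingRel a h
        trans := by
          rintro a b c (h₁ | ⟨h₁, h₁'⟩) (h₂ | ⟨h₂, h₂'⟩)
          · exact Or.inl (h₁.trans h₂)
          · exact Or.inl (h₂ ▸ h₁)
          · exact Or.inl (h₁ ▸ h₂)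
          · exact Or.inr ⟨h₁.trans h₂, trans_of WellOrderingRel h₁' h₂'⟩
        trichotomous := by
          intro a b h₁ h₂
          simp only [lt, not_or, not_and] at h₁ h₂
          have hab : h a = h b := le_antisymm (not_lt.1 h₂.1) (not_lt.1 h₁.1)
          exact Std.Trichotomous.trichotomous (r := WellOrderingRel) _ _
            (h₁.2 hab) (h₂.2 hab.symm) }
  · simp only [lt, hrh, hi.lt_iff_lt, hi.injective.eq_iff]
    rw [← hBlt]
    refine or_iff_left ?_
    rintro ⟨rfl, h⟩
    exact irrefl_of WellOrderingRel _ h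
  · simp only [lt, hsh, hj.lt_iff_lt, hj.injective.eq_iff]
    rw [← hClt]
    refine or_iff_left ?_
    rintro ⟨rfl, h⟩
    exact irrefl_of WellOrderingRel _ h

/-! ### Inserting one point into a linear order -/

/-- The order on a one-point extension `i : D → E`, with new point `p`, in which `p` is placed
immediately above the initial segment `S` of `D`. -/
inductive InsLt {D E : Type*} (ltD : D → D → Prop) (i : D → E) (p : E) (S : Set D) :
    E → E → Prop
  | old {a b : D} : ltD a b → InsLt ltD i p S (i a) (i b)
  | below {a : D} : a ∈ S → InsLt ltD i p S (i a) p
  | above {a : D} : a ∉ S → InsLt ltD i p S p (i a)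

section InsLt

variable {D E : Type*} {ltD : D → D → Prop} {i : D → E} {p : E} {S : Set D}

lemma insLt_old (hi : i.Injective) (hp : p ∉ Set.range i) (a b : D) :
    InsLt ltD i p S (i a) (i b) ↔ ltD a b := by
  refine ⟨fun h => ?_, .old⟩
  generalize hx : i a = x at h
  generalize hy : i b = y at h
  cases h with
  | old h => rwa [hi hx, hi hy]
  | below h => exact absurd ⟨b, hy⟩ hp
  | above h => exact absurd ⟨a, hx⟩ hp

lemma insLt_below (hi : i.Injective) (hp : p ∉ Set.range i) (a : D) :
    InsLt ltD i p S (i a) p ↔ a ∈ S := by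
  refine ⟨fun h => ?_, .below⟩
  generalize hx : i a = x at h
  generalize hy : p = y at h
  cases h with
  | old h => exact absurd ⟨_, hy.symm⟩ hp
  | below h => rwa [hi hx]
  | above h => exact absurd ⟨_, hy.symm⟩ hp

lemma insLt_above (hi : i.Injective) (hp : p ∉ Set.range i) (a : D) :
    InsLt ltD i p S p (i a) ↔ a ∉ S := by
  refine ⟨fun h => ?_, .above⟩
  generalize hx : i a = x at h
  generalize hy : p = y at h
  cases h with
  | old h => exact absurd ⟨_, hy.symm⟩ hp
  | below h => exact absurd ⟨_, hy.symm⟩ hp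
  | above h => rwa [hi hx]

lemma insLt_self (hp : p ∉ Set.range i) : ¬ InsLt ltD i p S p p := by
  suffices H : ∀ x y, InsLt ltD i p S x y → x = p → y ≠ p from fun h => H p p h rfl rfl
  rintro _ _ (_ | _ | _) hx hy
  · exact hp ⟨_, hx⟩
  · exact hp ⟨_, hx⟩
  · exact hp ⟨_, hy⟩

lemma isStrictTotalOrder_insLt (hD : IsStrictTotalOrder D ltD) (hi : i.Injective)
    (hp : p ∉ Set.range i) (hall : ∀ e, e = p ∨ e ∈ Set.range i)
    (hS : ∀ a b, ltD a b → b ∈ S → a ∈ S) :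
    IsStrictTotalOrder E (InsLt ltD i p S) where
  irrefl a := by
    obtain rfl | ⟨a, rfl⟩ := hall a
    · exact insLt_self hp
    · rw [insLt_old hi hp]
      exact irrefl_of ltD a
  trans a b c := by
    have hdown : ∀ x y, x ∈ S → y ∉ S → ltD x y := by
      intro x y hx hy
      by_contra hxy
      refine hy ?_
      by_cases hyx : ltD y x
      · exact hS _ _ hyx hx
      · rwa [← hD.trichotomous _ _ hxy hyx]
    obtain rfl | ⟨a, rfl⟩ := hall a <;> obtain rfl | ⟨b, rfl⟩ := hall b <;>
      obtain rfl | ⟨c, rfl⟩ := hall c <;>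
      simp only [insLt_old hi hp, insLt_below hi hp, insLt_above hi hp, insLt_self hp,
        false_implies, implies_true, imp_false]
    · exact fun h₁ h₂ => h₁ h₂
    · exact fun h₁ h₂ h₃ => h₁ (hS _ _ h₂ h₃)
    · exact fun h₁ h₂ => hdown _ _ h₁ h₂
    · exact fun h₁ h₂ => hS _ _ h₁ h₂
    · exact fun h₁ h₂ => trans_of ltD h₁ h₂
  trichotomous a b := by
    obtain rfl | ⟨a, rfl⟩ := hall a <;> obtain rfl | ⟨b, rfl⟩ := hall b <;>
      simp only [insLt_old hi hp, insLt_below hi hp, insLt_above hi hp, insLt_self hp,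
        implies_true]
    · exact fun h₁ h₂ => absurd h₂ h₁
    · exact fun h₁ h₂ => absurd h₁ h₂
    · exact fun h₁ h₂ => congrArg i (hD.trichotomous _ _ h₁ h₂)

end InsLt

end CDP

namespace CDP

variable {L : FirstOrder.Language.{u, v}}

/-! ### Quantifier-free types of ordered structures -/

lemma QF1Eq.restrict {L' : FirstOrder.Language.{u, v}} {A A' C C' D : Bundled.{w} L'.Structure}
    {iAA' : A ↪[L'] A'} {iA'C' : A' ↪[L'] C'} {iCC' : C ↪[L'] C'} {iAC : A ↪[L'] C}
    (hcomm : ∀ a, iA'C' (iAA' a) = iCC' (iAC a)) {f : A' ↪[L'] D} {x : D} {c : C}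
    (h : QF1Eq f x iA'C' (iCC' c)) : QF1Eq (f.comp iAA') x iAC c := by
  intro n R t
  rw [← iCC'.map_rel]
  convert h R (fun i => (t i).map iAA') using 2
  · ext i
    cases t i <;> rfl
  · ext i
    rcases h : t i with _ | a <;> simp [h, hcomm]

lemma QF1Eq.ordRel {A D E : Bundled.{w} (L.sum Language.order).Structure}
    {f : A ↪[L.sum Language.order] D} {x : D} {g : A ↪[L.sum Language.order] E} {y : E}
    (h : QF1Eq f x g y) (s t : Option A) :
    OrdRel (L := L) (s.elim x f) (t.elim x f) ↔ OrdRel (L := L) (s.elim y g) (t.elim y g) := by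
  have := h (Sum.inr leSymb : (L.sum Language.order).Relations 2) ![s, t]
  have e : ∀ {N : Bundled.{w} (L.sum Language.order).Structure} (k : A → N) (z : N),
      (fun i => (![s, t] i).elim z k) = ![s.elim z k, t.elim z k] := fun k z => by
    ext i; fin_cases i <;> rfl
  rwa [e, e] at this

lemma QF1Eq.red {A D E : Bundled.{w} (L.sum Language.order).Structure}
    {f : A ↪[L.sum Language.order] D} {x : D} {g : A ↪[L.sum Language.order] E} {y : E}
    (h : QF1Eq f x g y) : QF1Eq (redEmb f) x (redEmb g) y :=
  fun R t => h (Sum.inl R) t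

lemma ordRel_flip {N : Type*} [(L.sum Language.order).Structure N]
    (hN : IsStrictTotalOrder N (OrdRel (L := L))) {a b : N} (hab : a ≠ b) :
    OrdRel (L := L) a b ↔ ¬ OrdRel (L := L) b a :=
  ⟨fun h h' => irrefl_of (OrdRel (L := L)) a (trans_of _ h h'),
    fun h => by_contra fun h' => hab (hN.trichotomous _ _ h' h)⟩

/-- For linear orders, the order part of a quantifier-free 1-type over `A` of a new point is
determined by its lower cut in `A`. -/
lemma qf1Eq_of_cut {A D E : Bundled.{w} (L.sum Language.order).Structure}
    (hD : IsStrictTotalOrder D (OrdRel (L := L))) (hE : IsStrictTotalOrder E (OrdRel (L := L)))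
    {f : A ↪[L.sum Language.order] D} {x : D} {g : A ↪[L.sum Language.order] E} {y : E}
    (hx : x ∉ Set.range f) (hy : y ∉ Set.range g) (h : QF1Eq (redEmb f) x (redEmb g) y)
    (hcut : ∀ a, OrdRel (L := L) (f a) x ↔ OrdRel (L := L) (g a) y) : QF1Eq f x g y := by
  intro n R t
  rcases R with R | R
  · exact h R t
  obtain ⟨i, j, hij⟩ := relMap_inr.{u, v, w} L R
  refine (hij _).trans (Iff.trans ?_ (hij _).symm)
  rcases t i with _ | a <;> rcases t j with _ | b <;> simp only [Option.elim]
  · exact iff_of_false (irrefl_of _ _) (irrefl_of _ _)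
  · rw [ordRel_flip hD fun e => hx ⟨b, e.symm⟩, ordRel_flip hE fun e => hy ⟨b, e.symm⟩, hcut]
  · exact hcut a
  · rw [ordRel_map, ordRel_map]

/-- For linear orders, the order part of a quantifier-free 2-type over `A` of two new points is
determined by their lower cuts in `A` and by their mutual order. -/
lemma qf2Eq_of_cut {A D E : Bundled.{w} (L.sum Language.order).Structure}
    (hD : IsStrictTotalOrder D (OrdRel (L := L))) (hE : IsStrictTotalOrder E (OrdRel (L := L)))
    {f : A ↪[L.sum Language.order] D} {x₁ x₂ : D} {g : A ↪[L.sum Language.order] E} {y₁ y₂ : E}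
    (hx₁ : x₁ ∉ Set.range f) (hx₂ : x₂ ∉ Set.range f) (hx : x₁ ≠ x₂)
    (hy₁ : y₁ ∉ Set.range g) (hy₂ : y₂ ∉ Set.range g) (hy : y₁ ≠ y₂)
    (h : QF2Eq (redEmb f) x₁ x₂ (redEmb g) y₁ y₂)
    (hcut₁ : ∀ a, OrdRel (L := L) (f a) x₁ ↔ OrdRel (L := L) (g a) y₁)
    (hcut₂ : ∀ a, OrdRel (L := L) (f a) x₂ ↔ OrdRel (L := L) (g a) y₂)
    (h₁₂ : OrdRel (L := L) x₁ x₂ ↔ OrdRel (L := L) y₁ y₂) : QF2Eq f x₁ x₂ g y₁ y₂ := by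
  intro n R t
  rcases R with R | R
  · exact h R t
  obtain ⟨i, j, hij⟩ := relMap_inr.{u, v, w} L R
  refine (hij _).trans (Iff.trans ?_ (hij _).symm)
  have flip : ∀ a, (OrdRel (L := L) x₁ (f a) ↔ OrdRel (L := L) y₁ (g a)) ∧
      (OrdRel (L := L) x₂ (f a) ↔ OrdRel (L := L) y₂ (g a)) := fun a => by
    rw [ordRel_flip hD fun e => hx₁ ⟨a, e.symm⟩, ordRel_flip hE fun e => hy₁ ⟨a, e.symm⟩,
      ordRel_flip hD fun e => hx₂ ⟨a, e.symm⟩, ordRel_flip hE fun e => hy₂ ⟨a, e.symm⟩,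
      hcut₁, hcut₂]
    exact ⟨Iff.rfl, Iff.rfl⟩
  have h₂₁ : OrdRel (L := L) x₂ x₁ ↔ OrdRel (L := L) y₂ y₁ := by
    rw [ordRel_flip hD hx.symm, ordRel_flip hE hy.symm, h₁₂]
  have hirr : ∀ (x : D) (y : E), OrdRel (L := L) x x ↔ OrdRel (L := L) y y := fun x y =>
    iff_of_false (irrefl_of _ _) (irrefl_of _ _)
  rcases t i with a | k <;> rcases t j with b | l
  · exact (ordRel_map f a b).trans (ordRel_map g a b).symm
  · fin_cases l
    · exact hcut₁ a
    · exact hcut₂ a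
  · fin_cases k
    · exact (flip b).1
    · exact (flip b).2
  · fin_cases k <;> fin_cases l
    · exact hirr _ _
    · exact h₁₂
    · exact h₂₁
    · exact hirr _ _

/-! ### Disjoint amalgamation and insertion of points -/

variable {K : Set (Bundled.{w} L.Structure)}

lemma orderedExpansion_dap [L.IsRelational] (hK : IsFraisseClass K) (hF : FAP K) :
    DAP (orderedExpansion K) := by
  intro A B C hA hB hC f g
  obtain ⟨D, hD, r, s, hrs, hdis, -⟩ := hF _ _ _ hA.1 hB.1 hC.1 (redEmb f) (redEmb g)
  have : Finite B := hK.2.1 _ hB.1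
  have : Finite C := hK.2.1 _ hC.1
  have hrs' : ∀ a : A, r (f a) = s (g a) := fun a => DFunLike.congr_fun hrs a
  obtain ⟨lt, hlt, hltB, hltC⟩ := exists_amalgam_order (f := f) (g := g) (r := r) (s := s)
    hB.2 hC.2 g.injective (fun a b => by rw [ordRel_map, ordRel_map]) r.injective s.injective hrs'
    (fun b c hbc => by
      have hmem : r b ∈ Set.range r ∩ Set.range s := ⟨⟨b, rfl⟩, ⟨c, hbc.symm⟩⟩
      rw [hdis] at hmem
      obtain ⟨a, ha⟩ := hmem
      exact ⟨a, r.injective ha.symm⟩)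
  refine ⟨expand D lt, expand_mem hD hlt, liftEmb (N := expand D lt) r hltB,
    liftEmb (N := expand D lt) s hltC, ?_, hdis⟩
  ext a
  exact hrs' a

/-- Every `c : C` yields a one-point extension of `C` in `K`, obtained by amalgamating `C` with
itself over `C ∖ {c}`. -/
lemma exists_onePointExt [L.IsRelational] (hK : IsFraisseClass K) (hF : FAP K)
    {C : Bundled.{w} L.Structure} (hC : C ∈ K) (c : C) :
    ∃ E ∈ K, ∃ (e : C ↪[L] E) (p : E), IsOnePointExt e p := by
  obtain ⟨A, i, hi⟩ := exists_emb_range C {x | x ≠ c}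
  obtain ⟨D, hD, r, s, -, hdis, -⟩ := hF A C C (hK.2.2.2.1 C hC A ⟨i⟩) hC hC i i
  have hrc : r c ∉ Set.range s := fun h => by
    have hmem : r c ∈ Set.range r ∩ Set.range s := ⟨⟨c, rfl⟩, h⟩
    rw [hdis] at hmem
    obtain ⟨a, ha⟩ := hmem
    have : i a ∈ {x | x ≠ c} := hi ▸ ⟨a, rfl⟩
    exact this (r.injective ha)
  obtain ⟨E, j, hj⟩ := exists_emb_range D (insert (r c) (Set.range s))
  obtain ⟨e, he⟩ := exists_factor s j (by rw [hj]; exact Set.subset_insert _ _)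
  obtain ⟨p, hp⟩ : r c ∈ Set.range j := hj ▸ Set.mem_insert _ _
  refine ⟨E, hK.2.2.2.1 D hD E ⟨j⟩, e, p, ?_, fun x => ?_⟩
  · rintro ⟨x, rfl⟩
    exact hrc ⟨x, by rw [← he, hp]⟩
  · have : j x ∈ insert (r c) (Set.range s) := hj ▸ ⟨x, rfl⟩
    rcases this with h | ⟨y, hy⟩
    · exact Or.inl (j.injective (h.trans hp.symm))
    · exact Or.inr ⟨y, j.injective ((he y).trans hy)⟩

/-- A one-point `L`-extension of an ordered structure can be ordered by placing the new point
immediately above any given initial segment. -/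
lemma exists_insert [L.IsRelational] {D : Bundled.{w} (L.sum Language.order).Structure}
    (hD : D ∈ orderedExpansion K) {E : Bundled.{w} L.Structure} (hE : E ∈ K)
    (i : red D ↪[L] E) (p : E) (hp : IsOnePointExt i p) (S : Set D)
    (hS : ∀ a b : D, OrdRel (L := L) a b → b ∈ S → a ∈ S) :
    ∃ lt : E → E → Prop, expand E lt ∈ orderedExpansion K ∧
      ∃ i' : D ↪[L.sum Language.order] expand E lt,
        redEmb i' = i ∧ ∀ a, OrdRel (L := L) (N := expand E lt) (i' a) p ↔ a ∈ S := by
  let lt : E → E → Prop := InsLt (D := D) (OrdRel (L := L)) i p S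
  refine ⟨lt, expand_mem hE (isStrictTotalOrder_insLt hD.2 i.injective hp.1 hp.2 hS),
    liftEmb (N := expand E lt) i (insLt_old i.injective hp.1), rfl,
    insLt_below (D := D) i.injective hp.1⟩

end CDP

namespace CDP

variable {L : FirstOrder.Language.{u, v}} {K : Set (Bundled.{w} L.Structure)}

/-! ### The extension property over a separating point -/

/-- If some point `a'` of `A'` lies between the new vertices `v` and `w`, then SFAP for the
reducts gives the extension required by SDAP: `a'` forces the relative order of any realizations
of the two types. -/
lemma sdapWitness_of_separated [L.IsRelational] (hSFAP : SFAP K)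
    {A C A' C' : Bundled.{w} (L.sum Language.order).Structure}
    (hA : A ∈ orderedExpansion K) (hC : C ∈ orderedExpansion K) (hC' : C' ∈ orderedExpansion K)
    {iAC : A ↪[L.sum Language.order] C} {v w : C} (hvw : IsTwoPointExt iAC v w)
    {iAA' : A ↪[L.sum Language.order] A'} {iA'C' : A' ↪[L.sum Language.order] C'}
    {iCC' : C ↪[L.sum Language.order] C'}
    (hcomm : ∀ a, iA'C' (iAA' a) = iCC' (iAC a))
    (hrange : Set.range iA'C' ∩ Set.range iCC' = Set.range (iA'C'.comp iAA'))
    (htwo : IsTwoPointExt iA'C' (iCC' v) (iCC' w))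
    (a' : A')
    (hva' : OrdRel (L := L) (iCC' v) (iA'C' a') ↔ OrdRel (L := L) v w)
    (hwa' : OrdRel (L := L) (iCC' w) (iA'C' a') ↔ OrdRel (L := L) w v) :
    SDAPWitness (orderedExpansion K) iAC v w A' C' iAA' iA'C' iCC' := by
  refine ⟨by ext a; exact hcomm a, hrange, htwo, ?_⟩
  intro B hB iA'B Bσ hBσ jσ vσ hvσ hσ Bτ hBτ jτ wτ hwτ hτ D hD iBD v'' hv'' hv''σ
  have hvwC := hvw.1
  have hσA : QF1Eq ((jσ.comp iA'B).comp iAA') vσ iAC v := hσ.restrict hcomm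
  have hτA : QF1Eq ((jτ.comp iA'B).comp iAA') wτ iAC w := hτ.restrict hcomm
  obtain ⟨E, hE, iDE, w'', hw'', hτE, hCE, -⟩ := hSFAP.2 (red A) (red C) hA.1 hC.1 (redEmb iAC)
    v w hvw (red B) hB.1 (redEmb (iA'B.comp iAA'))
    (red Bσ) hBσ.1 (redEmb jσ) vσ hvσ hσA.red (red Bτ) hBτ.1 (redEmb jτ) wτ hwτ hτA.red
    (red D) hD.1 (redEmb iBD) v'' hv'' hv''σ.red
  -- the cut of `D` in which the new vertex is placed
  let S : Set D := {d | (d = v'' ∧ OrdRel (L := L) v w) ∨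
    ∃ b, d = iBD b ∧ OrdRel (L := L) (jτ b) wτ}
  have hSv : v'' ∈ S ↔ OrdRel (L := L) v w := by
    refine ⟨?_, fun h => Or.inl ⟨rfl, h⟩⟩
    rintro (h | ⟨b, hb, -⟩)
    · exact h.2
    · exact absurd ⟨b, hb.symm⟩ hv''.1
  have hSB : ∀ b, iBD b ∈ S ↔ OrdRel (L := L) (jτ b) wτ := by
    refine fun b => ⟨?_, fun h => Or.inr ⟨b, rfl, h⟩⟩
    rintro (h | ⟨b', hb, h⟩)
    · exact absurd ⟨b, h.1⟩ hv''.1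
    · rwa [iBD.injective hb]
  -- the position of the separating point relative to the two vertices
  have hva : OrdRel (L := L) v'' (iBD (iA'B a')) ↔ OrdRel (L := L) v w :=
    (hv''σ.ordRel none (some (iA'B a'))).trans ((hσ.ordRel none (some a')).trans hva')
  have hwa : OrdRel (L := L) (jτ (iA'B a')) wτ ↔ OrdRel (L := L) v w := by
    refine (hτ.ordRel (some a') none).trans ?_
    change OrdRel (L := L) (iA'C' a') (iCC' w) ↔ _
    rw [ordRel_flip hC'.2 fun e => htwo.2.2.1 ⟨a', e⟩, hwa', ordRel_flip hC.2 hvwC]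
  have hS : ∀ a b : D, OrdRel (L := L) a b → b ∈ S → a ∈ S := by
    have := hB.2
    have := hD.2
    have := hBτ.2
    intro x y hxy hy
    obtain rfl | ⟨b, rfl⟩ := hv''.2 x <;> obtain rfl | ⟨c, rfl⟩ := hv''.2 y
    · exact hy
    · -- if `w < v`, then `a' < v'' < c < w''`, whereas `w'' < a'`
      rw [hSv]
      by_contra hlt
      rw [hSB] at hy
      have h₁ : OrdRel (L := L) (iBD (iA'B a')) x :=
        by_contra fun h => hlt (hva.1 ((ordRel_flip hD.2 fun e => hv''.1 ⟨_, e.symm⟩).2 h))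
      have h₂ := (ordRel_map jτ _ _).2 ((ordRel_map iBD _ _).1 (trans_of (OrdRel (L := L)) h₁ hxy))
      exact hlt (hwa.1 (trans_of (OrdRel (L := L)) h₂ hy))
    · -- if `v < w`, then `b < v'' < a' < w''`
      rw [hSv] at hy
      rw [hSB]
      have h₂ := (ordRel_map jτ _ _).2 ((ordRel_map iBD _ _).1
        (trans_of (OrdRel (L := L)) hxy (hva.2 hy)))
      exact trans_of (OrdRel (L := L)) h₂ (hwa.2 hy)
    · rw [hSB] at hy ⊢
      rw [ordRel_map, ← ordRel_map jτ] at hxy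
      exact trans_of (OrdRel (L := L)) hxy hy
  obtain ⟨lt, hElt, iDE', rfl, hcut⟩ := exists_insert hD hE iDE w'' hw'' S hS
  have hw''B : (w'' : expand E lt) ∉ Set.range (iDE'.comp iBD) :=
    fun ⟨b, hb⟩ => hw''.1 ⟨iBD b, hb⟩
  refine ⟨expand E lt, hElt, iDE', w'', hw'', ?_, ?_⟩
  · exact qf1Eq_of_cut hElt.2 hBτ.2 hw''B hwτ.1 hτE fun b => (hcut _).trans (hSB b)
  · refine qf2Eq_of_cut hElt.2 hC.2 ?_ ?_ ?_ hvw.2.1 hvw.2.2.1 hvwC hCE (fun a => ?_)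
      (fun a => ?_) ((hcut _).trans hSv)
    · rintro ⟨a, ha⟩
      exact hv''.1 ⟨_, iDE'.injective ha⟩
    · rintro ⟨a, ha⟩
      exact hw''B ⟨_, ha⟩
    · exact fun h => hw''.1 ⟨_, h⟩
    · exact (ordRel_map iDE' _ _).trans ((hv''σ.ordRel (some _) none).trans
        (hσA.ordRel (some a) none))
    · exact (hcut _).trans ((hSB _).trans (hτA.ordRel (some a) none))

/-- An ordered structure has a one-point extension whose new point lies immediately above the
smaller of two given points `v ≠ w`, hence between them. -/
lemma exists_separating_point [L.IsRelational] (hK : IsFraisseClass K) (hF : FAP K)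
    {C : Bundled.{w} (L.sum Language.order).Structure} (hC : C ∈ orderedExpansion K)
    {v w : C} (hvw : v ≠ w) :
    ∃ C' ∈ orderedExpansion K, ∃ (i : C ↪[L.sum Language.order] C') (p : C'),
      IsOnePointExt i p ∧ (OrdRel (L := L) (i v) p ↔ OrdRel (L := L) v w) ∧
        (OrdRel (L := L) (i w) p ↔ OrdRel (L := L) w v) := by
  have := hC.2
  have htr : ∀ {x y z : C}, OrdRel (L := L) x y → OrdRel (L := L) y z → OrdRel (L := L) x z :=
    fun h₁ h₂ => trans_of (OrdRel (L := L)) h₁ h₂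
  obtain ⟨E, hE, e, p, hp⟩ := exists_onePointExt hK hF hC.1 v
  obtain ⟨lt, hC', i, rfl, hcut⟩ := exists_insert hC hE e p hp
    {c | (OrdRel (L := L) c v ∨ c = v) ∧ (OrdRel (L := L) c w ∨ c = w)} (by
      rintro a b hab ⟨h₁, h₂⟩
      refine ⟨Or.inl ?_, Or.inl ?_⟩
      · rcases h₁ with h | rfl
        · exact htr hab h
        · exact hab
      · rcases h₂ with h | rfl
        · exact htr hab h
        · exact hab)
  refine ⟨expand E lt, hC', i, p, hp, (hcut v).trans ?_, (hcut w).trans ?_⟩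
  · simp [hvw]
  · simp [hvw.symm]

end CDP

/-- If a Fraïssé class `K` in a finite relational language satisfies SFAP, then
its ordered expansion `K^<` satisfies SDAP. -/
theorem orderedExpansion_sdap
    (L : FirstOrder.Language.{u, v}) [L.IsRelational]
    (hfin : Finite (Σ n, L.Relations n))
    (K : Set (CategoryTheory.Bundled.{w} L.Structure))
    (hK : CDP.IsFraisseClass K)
    (hSFAP : CDP.SFAP K) :
    CDP.SDAP (CDP.orderedExpansion K) := by
  open CDP in
  refine ⟨orderedExpansion_dap hK hSFAP.1, fun A C hA hC iAC v w hvw => ?_⟩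
  obtain ⟨C', hC', iCC', p, hp, hvp, hwp⟩ := exists_separating_point hK hSFAP.1 hC hvw.1
  -- `A'` is `C'` without the two vertices, so it consists of `A` and the separating point `p`
  obtain ⟨A', iA'C', hA'⟩ := exists_emb_range C' {x | x ≠ iCC' v ∧ x ≠ iCC' w}
  have hmem : ∀ x, x ∈ Set.range iA'C' ↔ x ≠ iCC' v ∧ x ≠ iCC' w := fun x => by
    rw [hA']; rfl
  obtain ⟨iAA', hcomm⟩ := exists_factor (iCC'.comp iAC) iA'C' (by
    rintro _ ⟨a, rfl⟩
    exact (hmem _).2 ⟨fun h => hvw.2.1 ⟨a, iCC'.injective h⟩,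
      fun h => hvw.2.2.1 ⟨a, iCC'.injective h⟩⟩)
  obtain ⟨a', rfl⟩ : p ∈ Set.range iA'C' :=
    (hmem p).2 ⟨fun h => hp.1 ⟨v, h.symm⟩, fun h => hp.1 ⟨w, h.symm⟩⟩
  refine ⟨A', C', orderedExpansion_hereditary hK hC' iA'C', hC', iAA', iA'C', iCC',
    sdapWitness_of_separated hSFAP hA hC hC' hvw hcomm ?_ ?_ a' hvp hwp⟩
  · ext x
    constructor
    · rintro ⟨hx, c, rfl⟩
      obtain ⟨h₁, h₂⟩ := (hmem _).1 hx
      rcases hvw.2.2.2 c with rfl | rfl | ⟨a, rfl⟩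
      · exact absurd rfl h₁
      · exact absurd rfl h₂
      · exact ⟨a, hcomm a⟩
    · rintro ⟨a, rfl⟩
      exact ⟨⟨_, rfl⟩, ⟨iAC a, (hcomm a).symm⟩⟩
  · refine ⟨fun h => hvw.1 (iCC'.injective h), fun h => ((hmem _).1 h).1 rfl,
      fun h => ((hmem _).1 h).2 rfl, fun c => ?_⟩
    rw [hmem]
    tauto
end

section
/- The structure ℚ_n is indivisible: let n ≥ 1 and let p : ℚ → {0, …, n−1} be a labeling such that each fiber p⁻¹(i) is dense in ℚ (for all rationals a < b and every i < n there exists x with a < x < b and p(x) = i). Then for every i < n, every k ≥ 1, and every coloring c : ℚ → {0, …, k−1}, there exists a strictly increasing map f : ℚ → ℚ with p(f(q)) = p(q) for all q ∈ ℚ, such that c is constant on the set { f(q) : q ∈ ℚ, p(q) = i }. -/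
/-!
Call a color `j` dense on an interval `(a, b)` if every subinterval of `(a, b)` contains a point of
label `i` and color `j`. Some color is dense on some interval: otherwise, treating the finitely many
colors one at a time, one shrinks to an interval that has no point of label `i` in any color,
against the density of the fibers (`exists_dense_color`).

Inside such an interval, the set of points of label `i` and color `j` and the fibers of the other
labels are all dense, so `ℚ` is embedded into it by the "forth" half of Cantor's back-and-forth
argument (`exists_strictMono_of_dense`): the points of `ℚ` are treated in the order of an
enumeration, each being sent to an admissible point in the gap left by the finitely many earlier
values.
-/

/-- Shrinking argument, one color at a time: inside any interval there is a subinterval on which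
some color of `S` is dense among the points satisfying `P`, or no such point has a color in `S`. -/
lemma exists_dense_or_avoid {κ : Type*} [DecidableEq κ] (P : ℚ → Prop) (c : ℚ → κ)
    (S : Finset κ) :
    ∃ a b : ℚ, a < b ∧
      ((∃ j, ∀ u v, a ≤ u → u < v → v ≤ b → ∃ x, u < x ∧ x < v ∧ P x ∧ c x = j) ∨
        ∀ x, a < x → x < b → P x → c x ∉ S) := by
  induction S using Finset.induction_on with
  | empty => exact ⟨0, 1, by norm_num, Or.inr (by simp)⟩
  | insert j S _ ih =>
    obtain ⟨a, b, hab, h | h⟩ := ih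
    · exact ⟨a, b, hab, Or.inl h⟩
    by_cases hj : ∀ u v, a ≤ u → u < v → v ≤ b → ∃ x, u < x ∧ x < v ∧ P x ∧ c x = j
    · exact ⟨a, b, hab, Or.inl ⟨j, hj⟩⟩
    push Not at hj
    obtain ⟨u, v, hau, huv, hvb, hj⟩ := hj
    refine ⟨u, v, huv, Or.inr fun x hux hxv hP => ?_⟩
    rw [Finset.mem_insert, not_or]
    exact ⟨hj x hux hxv hP, h x (hau.trans_lt hux) (hxv.trans_le hvb) hP⟩

lemma exists_dense_color {κ : Type*} [Fintype κ] [DecidableEq κ] (P : ℚ → Prop) (c : ℚ → κ)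
    (hP : ∀ a b : ℚ, a < b → ∃ x, a < x ∧ x < b ∧ P x) :
    ∃ a b : ℚ, a < b ∧
      ∃ j, ∀ u v, a ≤ u → u < v → v ≤ b → ∃ x, u < x ∧ x < v ∧ P x ∧ c x = j := by
  obtain ⟨a, b, hab, h | h⟩ := exists_dense_or_avoid P c Finset.univ
  · exact ⟨a, b, hab, h⟩
  · obtain ⟨x, hax, hxb, hx⟩ := hP a b hab
    exact absurd (Finset.mem_univ _) (h x hax hxb hx)

/-- The "forth" construction: if for each `q` the values `y` with `R q y` are dense in `(a, b)`,
then there is a strictly increasing `f` with `R q (f q)` for all `q`. -/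
lemma exists_strictMono_of_dense (R : ℚ → ℚ → Prop) (a b : ℚ) (hab : a < b)
    (hR : ∀ q u v, a ≤ u → u < v → v ≤ b → ∃ y, u < y ∧ y < v ∧ R q y) :
    ∃ f : ℚ → ℚ, StrictMono f ∧ ∀ q, R q (f q) := by
  classical
  let e : ℚ → ℕ := Encodable.encode
  have he : Function.Injective e := Encodable.encode_injective
  -- `good q F y`: `y` is an admissible value at `q`, given the values `F` at the earlier points
  let good : (q : ℚ) → ((q' : ℚ) → e q' < e q → ℚ) → ℚ → Prop := fun q F y =>
    a < y ∧ y < b ∧ R q y ∧ ∀ q' h, (q' < q → F q' h < y) ∧ (q < q' → y < F q' h)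
  let f : ℚ → ℚ := (measure e).wf.fix fun q F => Classical.epsilon (good q F)
  have hf : ∀ q, f q = Classical.epsilon (good q fun q' _ => f q') :=
    fun q => (measure e).wf.fix_eq _ q
  have key : ∀ N q, e q = N → good q (fun q' _ => f q') (f q) := by
    intro N
    induction N using Nat.strong_induction_on with
    | _ N ih =>
    rintro q rfl
    have ih' : ∀ q', e q' < e q → good q' (fun q'' _ => f q'') (f q') :=
      fun q' h => ih _ h q' rfl
    have hmono : ∀ s t, e s < e q → e t < e q → s < t → f s < f t := by
      intro s t hs ht hst
      rcases lt_trichotomy (e s) (e t) with h | h | h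
      · exact ((ih' t ht).2.2.2 s h).1 hst
      · exact absurd (he h) hst.ne
      · exact ((ih' s hs).2.2.2 t h).2 hst
    have hfin : {q' | e q' < e q}.Finite := (Set.finite_Iio (e q)).preimage he.injOn
    let E := hfin.toFinset
    have hE : ∀ x, x ∈ E ↔ e x < e q := fun x => by simp [E]
    let lo := insert a ((E.filter (· < q)).image f)
    let hi := insert b ((E.filter (q < ·)).image f)
    have hlohi : ∀ x ∈ lo, ∀ y ∈ hi, x < y := by
      intro x hx y hy
      simp only [lo, hi, Finset.mem_insert, Finset.mem_image, Finset.mem_filter, hE] at hx hy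
      rcases hx with rfl | ⟨s, ⟨hs, hsq⟩, rfl⟩ <;> rcases hy with rfl | ⟨t, ⟨ht, hqt⟩, rfl⟩
      · exact hab
      · exact (ih' t ht).1
      · exact (ih' s hs).2.1
      · exact hmono s t hs ht (hsq.trans hqt)
    -- two points `m < m'` of the gap, so that the density hypothesis applies between them
    obtain ⟨m, hm, hm'⟩ := Order.exists_between_finsets lo hi hlohi
    obtain ⟨m', hml, hmh⟩ := Order.exists_between_finsets (insert m lo) hi (by
      intro x hx y hy
      rcases Finset.mem_insert.1 hx with rfl | hx
      · exact hm' y hy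
      · exact hlohi x hx y hy)
    have ham : a < m := hm a (Finset.mem_insert_self _ _)
    have hmb : m' < b := hmh b (Finset.mem_insert_self _ _)
    obtain ⟨y, hmy, hym, hy⟩ :=
      hR q m m' ham.le (hml m (Finset.mem_insert_self _ _)) hmb.le
    have hgood : good q (fun q' _ => f q') y := by
      refine ⟨ham.trans hmy, hym.trans hmb, hy, fun q' h => ⟨fun hq => ?_, fun hq => ?_⟩⟩
      · refine (hm _ (Finset.mem_insert_of_mem (Finset.mem_image_of_mem f ?_))).trans hmy
        exact Finset.mem_filter.2 ⟨(hE _).2 h, hq⟩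
      · refine hym.trans (hmh _ (Finset.mem_insert_of_mem (Finset.mem_image_of_mem f ?_)))
        exact Finset.mem_filter.2 ⟨(hE _).2 h, hq⟩
    rw [hf q]
    exact Classical.epsilon_spec ⟨y, hgood⟩
  refine ⟨f, fun s t hst => ?_, fun q => (key _ q rfl).2.2.1⟩
  rcases lt_trichotomy (e s) (e t) with h | h | h
  · exact ((key _ t rfl).2.2.2 s h).1 hst
  · exact absurd (he h) hst.ne
  · exact ((key _ s rfl).2.2.2 t h).2 hst

/-- `ℚ_n` is indivisible: given a labeling `p : ℚ → Fin n` with all fibers dense,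
for every label `i` and every finite coloring of `ℚ` there is a strictly increasing,
label-preserving self-map `f` of `ℚ` such that the coloring is constant on the image under
`f` of the points with label `i`. -/
theorem ratPartition_indivisible
    (n : ℕ) (hn : 1 ≤ n) (p : ℚ → Fin n)
    (hdense : ∀ a b : ℚ, a < b → ∀ i : Fin n, ∃ x : ℚ, a < x ∧ x < b ∧ p x = i) :
    ∀ i : Fin n, ∀ k : ℕ, 1 ≤ k → ∀ c : ℚ → Fin k,
      ∃ f : ℚ → ℚ, StrictMono f ∧ (∀ q : ℚ, p (f q) = p q) ∧
        ∃ j : Fin k, ∀ q : ℚ, p q = i → c (f q) = j := by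
  intro i k _ c
  obtain ⟨a, b, hab, j, hj⟩ :=
    exists_dense_color (fun x => p x = i) c fun a b h => hdense a b h i
  obtain ⟨f, hf, hfR⟩ := exists_strictMono_of_dense
    (fun q y => p y = p q ∧ (p q = i → c y = j)) a b hab (by
      intro q u v hau huv hvb
      by_cases hq : p q = i
      · obtain ⟨x, hux, hxv, hpx, hcx⟩ := hj u v hau huv hvb
        exact ⟨x, hux, hxv, hpx.trans hq.symm, fun _ => hcx⟩
      · obtain ⟨x, hux, hxv, hpx⟩ := hdense u v huv (p q)
        exact ⟨x, hux, hxv, hpx, fun h => absurd h hq⟩)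
  exact ⟨f, hf, fun q => (hfR q).1, j, fun q => (hfR q).2⟩
end

section
/- The structure ℚ_ℚ is indivisible: equip ℚ × ℚ with the lexicographic order and with the equivalence relation E given by E((a,b),(c,d)) ⟺ a = c. For every k ≥ 1 and every coloring c : ℚ × ℚ → {0, …, k−1}, there exists an injection f : ℚ × ℚ → ℚ × ℚ that is strictly increasing with respect to the lexicographic order and satisfies, for all p, q ∈ ℚ × ℚ, (f(p)).1 = (f(q)).1 ⟺ p.1 = q.1, such that c ∘ f is constant. -/
/-!
The proof is two applications of the indivisibility of `(ℚ, <)`. Each column `{a} × ℚ` contains a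
monochromatic copy of `ℚ`, of some colour `i a`; colouring `a` by `i a`, a copy of `ℚ` inside the
first coordinates has constant `i a`, and the chosen subcopies of these columns together form the
required copy of `ℚ_ℚ`.

Indivisibility of `ℚ` (`exists_strictMono_const_color`) holds because, for finitely many colours,
some colour is dense in some open interval (`exists_dense_color`): otherwise the colours could be
avoided one after the other by passing to smaller intervals. The points of that colour in that
interval form a dense linear order, into which `ℚ` embeds.
-/

/-- The (strict) lexicographic order on `ℚ × ℚ`. -/
def QLex (p q : ℚ × ℚ) : Prop :=
  p.1 < q.1 ∨ (p.1 = q.1 ∧ p.2 < q.2)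

/-- If finitely many colours `S` suffice on the interval `(u, v)`, some colour `i` is dense in some
nonempty open subinterval. -/
theorem exists_dense_color_s13 {κ : Type*} (d : ℚ → κ) (S : Finset κ) :
    ∀ u v : ℚ, u < v → (∀ x, u < x → x < v → d x ∈ S) →
      ∃ i u' v', u' < v' ∧ ∀ a b, u' ≤ a → a < b → b ≤ v' → ∃ x, a < x ∧ x < b ∧ d x = i := by
  classical
  induction S using Finset.induction_on with
  | empty =>
    intro u v huv h
    obtain ⟨x, hx, hx'⟩ := exists_between huv
    exact absurd (h x hx hx') (Finset.notMem_empty _)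
  | insert i S _ ih =>
    intro u v huv h
    by_cases hd : ∀ a b, u ≤ a → a < b → b ≤ v → ∃ x, a < x ∧ x < b ∧ d x = i
    · exact ⟨i, u, v, huv, hd⟩
    · push Not at hd
      obtain ⟨a, b, hua, hab, hbv, hne⟩ := hd
      refine ih a b hab fun x hax hxb => ?_
      exact (Finset.mem_insert.1 (h x (hua.trans_lt hax) (hxb.trans_le hbv))).resolve_left
        (hne x hax hxb)

/-- The linear order `ℚ` is indivisible. -/
theorem exists_strictMono_const_color {κ : Type*} [Fintype κ] (d : ℚ → κ) :
    ∃ (i : κ) (g : ℚ → ℚ), StrictMono g ∧ ∀ x, d (g x) = i := by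
  obtain ⟨i, u, v, huv, h⟩ :=
    exists_dense_color_s13 d Finset.univ 0 1 one_pos fun _ _ _ => Finset.mem_univ _
  let T := {x : ℚ // u < x ∧ x < v ∧ d x = i}
  have : DenselyOrdered T := ⟨fun x y hxy => by
    obtain ⟨z, hxz, hzy, hz⟩ := h x.1 y.1 x.2.1.le hxy y.2.2.1.le
    exact ⟨⟨z, x.2.1.trans hxz, hzy.trans y.2.2.1, hz⟩, hxz, hzy⟩⟩
  have : Nontrivial T := by
    obtain ⟨x, hux, hxv, hx⟩ := h u v le_rfl huv le_rfl
    obtain ⟨y, hxy, hyv, hy⟩ := h x v hux.le hxv le_rfl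
    exact ⟨⟨x, hux, hxv, hx⟩, ⟨y, hux.trans hxy, hyv, hy⟩,
      fun e => hxy.ne (congrArg Subtype.val e)⟩
  obtain ⟨e⟩ := Order.embedding_from_countable_to_dense ℚ T
  exact ⟨i, fun x => (e x).1, fun _ _ hxy => e.strictMono hxy, fun x => (e x).2.2.2⟩

/-- `ℚ_ℚ` is indivisible: for every finite coloring of `ℚ × ℚ` (with the
lexicographic order and the equivalence relation of equal first coordinates) there is an
injection preserving the lexicographic order and the equivalence relation on whose image
the coloring is constant. -/
theorem ratRat_indivisible :
    ∀ k : ℕ, 1 ≤ k → ∀ c : ℚ × ℚ → Fin k,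
      ∃ f : ℚ × ℚ → ℚ × ℚ,
        Function.Injective f ∧
        (∀ p q : ℚ × ℚ, QLex p q → QLex (f p) (f q)) ∧
        (∀ p q : ℚ × ℚ, (f p).1 = (f q).1 ↔ p.1 = q.1) ∧
        ∃ i : Fin k, ∀ p : ℚ × ℚ, c (f p) = i := by
  intro k _ c
  choose col g hg hcol using fun a : ℚ => exists_strictMono_const_color fun b => c (a, b)
  obtain ⟨i, h, hh, hi⟩ := exists_strictMono_const_color col
  refine ⟨fun p => (h p.1, g (h p.1) p.2), ?_, ?_, fun p q => hh.injective.eq_iff, i,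
    fun p => (hcol _ _).trans (hi _)⟩
  · rintro ⟨a, b⟩ ⟨a', b'⟩ e
    obtain ⟨e₁, e₂⟩ := Prod.mk.inj e
    obtain rfl : a = a' := hh.injective e₁
    obtain rfl : b = b' := (hg _).injective e₂
    rfl
  · rintro ⟨a, b⟩ ⟨a', b'⟩ (hlt | ⟨heq, hlt⟩)
    · exact Or.inl (hh hlt)
    · obtain rfl : a = a' := heq
      exact Or.inr ⟨rfl, hg _ hlt⟩
end

section
/- The Rado graph is indivisible: let G be a graph on vertex set ℕ such that for all disjoint finite sets A, B ⊆ ℕ there exists a vertex v ∉ A ∪ B adjacent to every vertex of A and to no vertex of B. Then for every k ≥ 1 and every coloring c : ℕ → {0, …, k−1}, there exists an injection f : ℕ → ℕ such that for all x, y ∈ ℕ, f(x) and f(y) are adjacent in G if and only if x and y are adjacent in G, and c ∘ f is constant. -/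
/-!
Some colour class `S` has the extension property relative to itself: for disjoint finite
`A, B ⊆ S` there is a vertex of `S \ (A ∪ B)` adjacent to all of `A` and none of `B`. Otherwise
each colour `i` has a bad pair `A i, B i` inside its class; since classes of distinct colours are
disjoint, so are `⋃ A i` and `⋃ B i`, and a vertex that `G` provides for these two unions, of
colour `j` say, contradicts the badness of `A j, B j` (`exists_extending_color`).
Inside such a class a copy of `G` is then built greedily, one vertex at a time
(`exists_embedding_into`).
-/

/-- The extension property of `G` relative to a vertex set `S`. -/
def ExtendsWithin (G : SimpleGraph ℕ) (S : Set ℕ) : Prop :=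
  ∀ A B : Finset ℕ, (∀ a ∈ A, a ∈ S) → (∀ b ∈ B, b ∈ S) → Disjoint A B →
    ∃ v ∈ S, v ∉ A ∧ v ∉ B ∧ (∀ a ∈ A, G.Adj v a) ∧ (∀ b ∈ B, ¬ G.Adj v b)

theorem exists_extending_color (G : SimpleGraph ℕ)
    (hext : ∀ A B : Finset ℕ, Disjoint A B →
      ∃ v : ℕ, v ∉ A ∧ v ∉ B ∧ (∀ a ∈ A, G.Adj v a) ∧ (∀ b ∈ B, ¬ G.Adj v b))
    (k : ℕ) (c : ℕ → Fin k) : ∃ i, ExtendsWithin G {v | c v = i} := by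
  by_contra! h
  simp only [ExtendsWithin, not_forall] at h
  choose A B hA hB hAB hbad using h
  have hdisj : Disjoint (Finset.univ.biUnion A) (Finset.univ.biUnion B) := by
    rw [Finset.disjoint_left]
    intro x hxA hxB
    obtain ⟨i, -, hi⟩ := Finset.mem_biUnion.1 hxA
    obtain ⟨j, -, hj⟩ := Finset.mem_biUnion.1 hxB
    have hij : i = j := (hA i x hi).symm.trans (hB j x hj)
    subst hij
    exact Finset.disjoint_left.1 (hAB i) hi hj
  obtain ⟨v, hvA, hvB, hadj, hnadj⟩ := hext _ _ hdisj
  have hsub : ∀ (F : Fin k → Finset ℕ), ∀ x ∈ F (c v), x ∈ Finset.univ.biUnion F :=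
    fun F x hx => Finset.mem_biUnion.2 ⟨c v, Finset.mem_univ _, hx⟩
  exact hbad (c v) ⟨v, rfl, fun h => hvA (hsub A v h), fun h => hvB (hsub B v h),
    fun a ha => hadj a (hsub A a ha), fun b hb => hnadj b (hsub B b hb)⟩

open Classical in
/-- The greedy sequence for a choice function `e`: its `n`-th term is `e A B`, where `A` and `B`
collect the earlier terms whose indices are, respectively are not, adjacent to `n`. -/
noncomputable def greedySeq (G : SimpleGraph ℕ) (e : Finset ℕ → Finset ℕ → ℕ) (n : ℕ) : ℕ :=
  e ((Finset.univ.filter fun m : Fin n => G.Adj n m).image fun m => greedySeq G e m.1)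
    ((Finset.univ.filter fun m : Fin n => ¬ G.Adj n m).image fun m => greedySeq G e m.1)
termination_by n
decreasing_by all_goals exact m.2

theorem exists_embedding_into (G : SimpleGraph ℕ) (S : Set ℕ) (hS : ExtendsWithin G S) :
    ∃ f : ℕ → ℕ, Function.Injective f ∧ (∀ x y, G.Adj (f x) (f y) ↔ G.Adj x y) ∧
      ∀ x, f x ∈ S := by
  classical
  choose! e he using hS
  let f := greedySeq G e
  have key : ∀ n, f n ∈ S ∧ ∀ m < n, f m ≠ f n ∧ (G.Adj (f n) (f m) ↔ G.Adj n m) := by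
    intro n
    induction n using Nat.strong_induction_on with
    | _ n ih =>
      have inj : ∀ a < n, ∀ b < n, f a = f b → a = b := by
        intro a ha b hb hab
        rcases lt_trichotomy a b with h | h | h
        · exact absurd hab ((ih b hb).2 a h).1
        · exact h
        · exact absurd hab.symm ((ih a ha).2 b h).1
      set A := (Finset.univ.filter fun m : Fin n => G.Adj n m).image fun m => f m.1 with hA
      set B := (Finset.univ.filter fun m : Fin n => ¬ G.Adj n m).image fun m => f m.1 with hB
      have hf : f n = e A B := by
        simp only [f, hA, hB]
        rw [greedySeq]
      have memA : ∀ x, x ∈ A ↔ ∃ m, m < n ∧ G.Adj n m ∧ f m = x := by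
        intro x
        simp [hA, Fin.exists_iff, and_left_comm]
      have memB : ∀ x, x ∈ B ↔ ∃ m, m < n ∧ ¬ G.Adj n m ∧ f m = x := by
        intro x
        simp [hB, Fin.exists_iff, and_left_comm]
      have hAB : Disjoint A B := by
        rw [Finset.disjoint_left]
        intro x hxA hxB
        obtain ⟨a, ha, hna, rfl⟩ := (memA x).1 hxA
        obtain ⟨b, hb, hnb, hba⟩ := (memB _).1 hxB
        exact hnb (inj b hb a ha hba ▸ hna)
      have hAS : ∀ a ∈ A, a ∈ S := by
        intro x hx
        obtain ⟨a, ha, -, rfl⟩ := (memA x).1 hx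
        exact (ih a ha).1
      have hBS : ∀ b ∈ B, b ∈ S := by
        intro x hx
        obtain ⟨b, hb, -, rfl⟩ := (memB x).1 hx
        exact (ih b hb).1
      obtain ⟨h1, h2, h3, h4, h5⟩ := he A B hAS hBS hAB
      rw [← hf] at h1 h2 h3 h4 h5
      refine ⟨h1, fun m hm => ?_⟩
      by_cases hadj : G.Adj n m
      · have hmA : f m ∈ A := (memA _).2 ⟨m, hm, hadj, rfl⟩
        exact ⟨fun h => h2 (h ▸ hmA), iff_of_true (h4 _ hmA) hadj⟩
      · have hmB : f m ∈ B := (memB _).2 ⟨m, hm, hadj, rfl⟩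
        exact ⟨fun h => h3 (h ▸ hmB), iff_of_false (h5 _ hmB) hadj⟩
  refine ⟨f, fun x y hxy => ?_, fun x y => ?_, fun x => (key x).1⟩
  · rcases lt_trichotomy x y with h | h | h
    · exact absurd hxy ((key y).2 x h).1
    · exact h
    · exact absurd hxy.symm ((key x).2 y h).1
  · rcases lt_trichotomy x y with h | h | h
    · rw [G.adj_comm, G.adj_comm x]
      exact ((key y).2 x h).2
    · subst h
      simp
    · exact ((key x).2 y h).2

/-- The Rado graph is indivisible: if `G` is a graph on `ℕ` with the extension
property (for all disjoint finite `A`, `B` there is a vertex outside `A ∪ B` adjacent to all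
of `A` and none of `B`), then every finite coloring of `ℕ` is constant on the image of some
self-embedding of `G`. -/
theorem rado_indivisible
    (G : SimpleGraph ℕ)
    (hext : ∀ A B : Finset ℕ, Disjoint A B →
      ∃ v : ℕ, v ∉ A ∧ v ∉ B ∧ (∀ a ∈ A, G.Adj v a) ∧ (∀ b ∈ B, ¬ G.Adj v b)) :
    ∀ k : ℕ, 1 ≤ k → ∀ c : ℕ → Fin k,
      ∃ f : ℕ → ℕ, Function.Injective f ∧
        (∀ x y : ℕ, G.Adj (f x) (f y) ↔ G.Adj x y) ∧
        ∃ i : Fin k, ∀ x : ℕ, c (f x) = i := by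
  intro k _ c
  obtain ⟨i, hi⟩ := exists_extending_color G hext k c
  obtain ⟨f, hinj, hadj, hmem⟩ := exists_embedding_into G _ hi
  exact ⟨f, hinj, hadj, i, hmem⟩
end

section
/- The generic ordered graph is indivisible: let G be a graph on vertex set ℚ such that for all disjoint finite sets A, B ⊆ ℚ and all rationals a < b there exists v with a < v < b, v ∉ A ∪ B, v adjacent to every vertex of A and to no vertex of B. Then for every k ≥ 1 and every coloring c : ℚ → {0, …, k−1}, there exists a strictly increasing map f : ℚ → ℚ such that for all x, y ∈ ℚ, f(x) and f(y) are adjacent in G if and only if x and y are adjacent in G, and c ∘ f is constant. -/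
/-!
Only the extension property matters, and it can be asked of subsets. Call `T ⊆ (a, b)` *rich* if,
inside every subinterval of `(a, b)`, every adjacency pattern over finitely many points of `T` is
realized by a point of `T`. A rich set contains a copy of the whole ordered graph: partial
embeddings with finite domain extend to any further point, and countably many extensions suffice
(`IsRich.exists_embedding`).

Given a rich `S` and a color `i`, either the part of `S` colored `i` is itself rich, or some
pattern over that part is realized in some interval by no point of color `i`. In the second case
the points of `S` realizing this pattern in that interval form a rich set (`IsRich.realizations`)
that misses the color `i`. Induction on the set of available colors concludes, since a rich set is
nonempty.
-/

/-- `T` is a subset of the nonempty interval `(a, b)` in which every finite adjacency pattern over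
`T` has a realization within each subinterval of `(a, b)`. -/
def IsRich (G : SimpleGraph ℚ) (T : Set ℚ) (a b : ℚ) : Prop :=
  a < b ∧ (∀ v ∈ T, a < v ∧ v < b) ∧
    ∀ A B : Finset ℚ, Disjoint A B → (∀ x ∈ A, x ∈ T) → (∀ x ∈ B, x ∈ T) →
      ∀ p q : ℚ, a ≤ p → p < q → q ≤ b →
        ∃ v ∈ T, p < v ∧ v < q ∧ v ∉ A ∧ v ∉ B ∧ (∀ x ∈ A, G.Adj v x) ∧ ∀ y ∈ B, ¬ G.Adj v y

/-- A finite partial embedding of the ordered graph `G` into `T`, encoded as a finite set of pairs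
`(x, f x)`. The condition on the order makes the relation functional and injective. -/
def IsPartialEmbedding (G : SimpleGraph ℚ) (T : Set ℚ) (s : Finset (ℚ × ℚ)) : Prop :=
  (∀ p ∈ s, p.2 ∈ T) ∧ ∀ p ∈ s, ∀ q ∈ s,
    (p.1 < q.1 ↔ p.2 < q.2) ∧ (G.Adj p.2 q.2 ↔ G.Adj p.1 q.1)

/-- Richness passes to the realizations of a single pattern: a pattern over these realizations can
be merged with `(A, B)`, because no realization lies in `A` or `B`. -/
theorem IsRich.realizations {G : SimpleGraph ℚ} {S : Set ℚ} {a b : ℚ} (hS : IsRich G S a b)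
    {A B : Finset ℚ} (hAB : Disjoint A B) (hA : ∀ x ∈ A, x ∈ S) (hB : ∀ x ∈ B, x ∈ S)
    {p q : ℚ} (hap : a ≤ p) (hpq : p < q) (hqb : q ≤ b) :
    IsRich G {v | v ∈ S ∧ p < v ∧ v < q ∧ v ∉ A ∧ v ∉ B ∧
      (∀ x ∈ A, G.Adj v x) ∧ ∀ y ∈ B, ¬ G.Adj v y} p q := by
  refine ⟨hpq, fun v hv => ⟨hv.2.1, hv.2.2.1⟩, ?_⟩
  intro A' B' hd hA' hB' p' q' hp' hpq' hq'
  have hdisj : Disjoint (A ∪ A') (B ∪ B') := by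
    rw [Finset.disjoint_union_left, Finset.disjoint_union_right, Finset.disjoint_union_right]
    refine ⟨⟨hAB, Finset.disjoint_left.2 fun x hx hx' => (hB' x hx').2.2.2.1 hx⟩,
      Finset.disjoint_left.2 fun x hx hx' => (hA' x hx).2.2.2.2.1 hx', hd⟩
  obtain ⟨v, hvS, h1, h2, h3, h4, h5, h6⟩ := hS.2.2 (A ∪ A') (B ∪ B') hdisj
    (fun x hx => (Finset.mem_union.1 hx).elim (hA x) fun h => (hA' x h).1)
    (fun x hx => (Finset.mem_union.1 hx).elim (hB x) fun h => (hB' x h).1)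
    p' q' (hap.trans hp') hpq' (hq'.trans hqb)
  simp only [Finset.mem_union, not_or] at h3 h4 h5 h6
  exact ⟨v, ⟨hvS, hp'.trans_lt h1, h2.trans_le hq', h3.1, h4.1, fun x hx => h5 x (.inl hx),
    fun x hx => h6 x (.inl hx)⟩, h1, h2, h3.2, h4.2, fun x hx => h5 x (.inr hx),
    fun x hx => h6 x (.inr hx)⟩

/-- A finite partial embedding into a rich set extends to any further point. -/
theorem IsRich.extend {G : SimpleGraph ℚ} {T : Set ℚ} {a b : ℚ} (hT : IsRich G T a b)
    {s : Finset (ℚ × ℚ)} (hs : IsPartialEmbedding G T s) (x : ℚ) :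
    ∃ t, IsPartialEmbedding G T t ∧ s ⊆ t ∧ ∃ y, (x, y) ∈ t := by
  classical
  by_cases hx : ∃ y, (x, y) ∈ s
  · exact ⟨s, hs, subset_rfl, hx⟩
  have hne : ∀ p ∈ s, p.1 ≠ x := fun p hp h => hx ⟨p.2, h ▸ hp⟩
  -- The image of `x` has to lie strictly between these two finite sets.
  let L : Finset ℚ := insert a ((s.filter fun p => p.1 < x).image Prod.snd)
  let U : Finset ℚ := insert b ((s.filter fun p => x < p.1).image Prod.snd)
  have hLU : ∀ l ∈ L, ∀ u ∈ U, l < u := by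
    intro l hl u hu
    simp only [L, U, Finset.mem_insert, Finset.mem_image, Finset.mem_filter] at hl hu
    rcases hl with rfl | ⟨p, ⟨hp, hpx⟩, rfl⟩ <;> rcases hu with rfl | ⟨q, ⟨hq, hqx⟩, rfl⟩
    · exact hT.1
    · exact (hT.2.1 _ (hs.1 q hq)).1
    · exact (hT.2.1 _ (hs.1 p hp)).2
    · exact (hs.2 p hp q hq).1.1 (hpx.trans hqx)
  obtain ⟨m, hLm, hmU⟩ := Order.exists_between_finsets L U hLU
  obtain ⟨n, hmn, hnU⟩ := Order.exists_between_finsets {m} U (by simpa using hmU)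
  let A : Finset ℚ := (s.filter fun p => G.Adj x p.1).image Prod.snd
  let B : Finset ℚ := (s.filter fun p => ¬ G.Adj x p.1).image Prod.snd
  have hAB : Disjoint A B := by
    rw [Finset.disjoint_left]
    intro y hyA hyB
    simp only [A, B, Finset.mem_image, Finset.mem_filter] at hyA hyB
    obtain ⟨p, ⟨hp, hpx⟩, rfl⟩ := hyA
    obtain ⟨q, ⟨hq, hqx⟩, hqp⟩ := hyB
    have h1 := (hs.2 p hp q hq).1
    have h2 := (hs.2 q hq p hp).1
    rw [hqp] at h1 h2
    have : p.1 = q.1 := le_antisymm (not_lt.1 fun h => lt_irrefl _ (h2.1 h))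
      (not_lt.1 fun h => lt_irrefl _ (h1.1 h))
    exact hqx (this ▸ hpx)
  have hsub : ∀ P : ℚ × ℚ → Prop, ∀ [DecidablePred P], ∀ y ∈ (s.filter P).image Prod.snd,
      y ∈ T := by
    intro P _ y hy
    simp only [Finset.mem_image, Finset.mem_filter] at hy
    obtain ⟨p, ⟨hp, -⟩, rfl⟩ := hy
    exact hs.1 p hp
  obtain ⟨v, hvT, hmv, hvn, -, -, hvA, hvB⟩ := hT.2.2 A B hAB (hsub _) (hsub _) m n
    (hLm a (by simp [L])).le (hmn m (by simp)) (hnU b (by simp [U])).le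
  have hlt : ∀ p ∈ s, (p.1 < x → p.2 < v) ∧ (x < p.1 → v < p.2) := by
    intro p hp
    refine ⟨fun h => (hLm p.2 ?_).trans hmv, fun h => hvn.trans (hnU p.2 ?_)⟩
    · exact Finset.mem_insert_of_mem (Finset.mem_image_of_mem _ (Finset.mem_filter.2 ⟨hp, h⟩))
    · exact Finset.mem_insert_of_mem (Finset.mem_image_of_mem _ (Finset.mem_filter.2 ⟨hp, h⟩))
  have hadj : ∀ p ∈ s, (G.Adj v p.2 ↔ G.Adj x p.1) := by
    intro p hp
    refine ⟨fun h => ?_, fun h => ?_⟩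
    · by_contra hn
      exact hvB p.2 (Finset.mem_image_of_mem _ (Finset.mem_filter.2 ⟨hp, hn⟩)) h
    · exact hvA p.2 (Finset.mem_image_of_mem _ (Finset.mem_filter.2 ⟨hp, h⟩))
  have hord : ∀ p ∈ s, (p.1 < x ↔ p.2 < v) ∧ (x < p.1 ↔ v < p.2) := by
    intro p hp
    obtain ⟨h1, h2⟩ := hlt p hp
    rcases lt_or_gt_of_ne (hne p hp) with h | h
    · exact ⟨iff_of_true h (h1 h), iff_of_false h.not_gt (h1 h).not_gt⟩
    · exact ⟨iff_of_false h.not_gt (h2 h).not_gt, iff_of_true h (h2 h)⟩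
  refine ⟨insert (x, v) s, ⟨?_, ?_⟩, Finset.subset_insert _ _, v, Finset.mem_insert_self _ _⟩
  · intro p hp
    rcases Finset.mem_insert.1 hp with rfl | hp
    exacts [hvT, hs.1 p hp]
  · intro p hp q hq
    rcases Finset.mem_insert.1 hp with rfl | hp <;> rcases Finset.mem_insert.1 hq with rfl | hq
    · simp
    · exact ⟨(hord q hq).2, hadj q hq⟩
    · exact ⟨(hord p hp).1, by rw [G.adj_comm, hadj p hp, G.adj_comm]⟩
    · exact hs.2 p hp q hq

/-- A rich set contains a copy of the whole ordered graph: the embedding is read off an ideal of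
finite partial embeddings that meets, for each `x`, the cofinal set of those defined at `x`. -/
theorem IsRich.exists_embedding {G : SimpleGraph ℚ} {T : Set ℚ} {a b : ℚ}
    (hT : IsRich G T a b) :
    ∃ f : ℚ → ℚ, StrictMono f ∧ (∀ x y, G.Adj (f x) (f y) ↔ G.Adj x y) ∧ ∀ x, f x ∈ T := by
  let D : ℚ → Order.Cofinal {s // IsPartialEmbedding G T s} := fun x =>
    { carrier := {s | ∃ y, (x, y) ∈ s.1}
      isCofinal := fun s => by
        obtain ⟨t, ht, hst, hx⟩ := hT.extend s.2 x
        exact ⟨⟨t, ht⟩, hx, hst⟩ }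
  let I := Order.idealOfCofinals ⟨∅, by simp [IsPartialEmbedding]⟩ D
  have hI : ∀ x, ∃ y, ∃ s ∈ I, (x, y) ∈ s.1 := by
    intro x
    obtain ⟨s, ⟨y, hy⟩, hs⟩ := Order.cofinal_meets_idealOfCofinals
      ⟨∅, by simp [IsPartialEmbedding]⟩ D x
    exact ⟨y, s, hs, hy⟩
  choose f s hs hf using hI
  -- Any two values of `f` occur together in one partial embedding, by directedness.
  have key : ∀ x y, ∃ t, IsPartialEmbedding G T t ∧ (x, f x) ∈ t ∧ (y, f y) ∈ t := by
    intro x y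
    obtain ⟨t, -, hxt, hyt⟩ := I.directed _ (hs x) _ (hs y)
    exact ⟨t.1, t.2, hxt (hf x), hyt (hf y)⟩
  refine ⟨f, fun x y hxy => ?_, fun x y => ?_, fun x => (s x).2.1 _ (hf x)⟩
  · obtain ⟨t, ht, hx, hy⟩ := key x y
    exact (ht.2 _ hx _ hy).1.1 hxy
  · obtain ⟨t, ht, hx, hy⟩ := key x y
    exact (ht.2 _ hx _ hy).2

/-- A finitely colored rich set contains a monochromatic rich set. In the induction on the set `C` of
available colors, a color whose part of `S` is not rich is avoided by passing to the realizations of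
a pattern that this color fails to realize. -/
theorem IsRich.exists_mono {G : SimpleGraph ℚ} {κ : Type*} (c : ℚ → κ) (C : Finset κ) :
    ∀ (S : Set ℚ) (a b : ℚ), IsRich G S a b → (∀ v ∈ S, c v ∈ C) →
      ∃ (i : κ) (T : Set ℚ) (p q : ℚ), IsRich G T p q ∧ ∀ v ∈ T, c v = i := by
  classical
  induction C using Finset.induction_on with
  | empty =>
    intro S a b hS hc
    obtain ⟨v, hv, -⟩ := hS.2.2 ∅ ∅ (by simp) (by simp) (by simp) a b le_rfl hS.1 le_rfl
    exact absurd (hc v hv) (by simp)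
  | insert i C _ ih =>
    intro S a b hS hc
    by_cases h : IsRich G {v | v ∈ S ∧ c v = i} a b
    · exact ⟨i, _, a, b, h, fun v hv => hv.2⟩
    have h' : ¬ ∀ A B : Finset ℚ, Disjoint A B → _ :=
      fun h' => h ⟨hS.1, fun v hv => hS.2.1 v hv.1, h'⟩
    push Not at h'
    obtain ⟨A, B, hAB, hA, hB, p, q, hap, hpq, hqb, hno⟩ := h'
    refine ih _ p q
      (hS.realizations hAB (fun x hx => (hA x hx).1) (fun x hx => (hB x hx).1) hap hpq hqb) ?_
    rintro v ⟨hvS, h1, h2, h3, h4, h5, h6⟩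
    refine (Finset.mem_insert.1 (hc v hvS)).resolve_left fun hi => ?_
    obtain ⟨y, hy, hvy⟩ := hno v ⟨hvS, hi⟩ h1 h2 h3 h4 h5
    exact h6 y hy hvy

/-- The generic ordered graph is indivisible: if `G` is a graph on `ℚ` such that
for all disjoint finite `A`, `B` and all rationals `a < b` there is a vertex `v` with
`a < v < b`, outside `A ∪ B`, adjacent to all of `A` and none of `B`, then every finite
coloring of `ℚ` is constant on the image of some strictly increasing self-embedding of `G`. -/
theorem genericOrderedGraph_indivisible
    (G : SimpleGraph ℚ)
    (hext : ∀ A B : Finset ℚ, Disjoint A B → ∀ a b : ℚ, a < b →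
      ∃ v : ℚ, a < v ∧ v < b ∧ v ∉ A ∧ v ∉ B ∧
        (∀ x ∈ A, G.Adj v x) ∧ (∀ y ∈ B, ¬ G.Adj v y)) :
    ∀ k : ℕ, 1 ≤ k → ∀ c : ℚ → Fin k,
      ∃ f : ℚ → ℚ, StrictMono f ∧
        (∀ x y : ℚ, G.Adj (f x) (f y) ↔ G.Adj x y) ∧
        ∃ i : Fin k, ∀ x : ℚ, c (f x) = i := by
  intro k _ c
  have hrich : IsRich G (Set.Ioo 0 1) 0 1 := by
    refine ⟨one_pos, fun v hv => hv, fun A B hAB _ _ p q hp hpq hq => ?_⟩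
    obtain ⟨v, h1, h2, h⟩ := hext A B hAB p q hpq
    exact ⟨v, ⟨hp.trans_lt h1, h2.trans_le hq⟩, h1, h2, h⟩
  obtain ⟨i, T, p, q, hT, hi⟩ :=
    IsRich.exists_mono c Finset.univ _ _ _ hrich fun v _ => Finset.mem_univ _
  obtain ⟨f, hf, hadj, hfT⟩ := hT.exists_embedding
  exact ⟨f, hf, hadj, i, fun x => hi _ (hfT x)⟩
end

section
/- The generic 3-uniform hypergraph is indivisible: let R be a set of 3-element subsets of ℕ such that for every finite set F ⊆ ℕ and every set A of 2-element subsets of F, there exists v ∉ F such that for all distinct x, y ∈ F, {v, x, y} ∈ R if and only if {x, y} ∈ A. Then for every k ≥ 1 and every coloring c : ℕ → {0, …, k−1}, there exists an injection f : ℕ → ℕ such that for all pairwise distinct x, y, z ∈ ℕ, {f x, f y, f z} ∈ R if and only if {x, y, z} ∈ R, and c ∘ f is constant. -/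
/-!
The vertex set cannot be split into finitely many pieces all of which fail the extension
property. Suppose each colour class `Cᵢ` had a finite set `Fᵢ ⊆ Cᵢ` and a set of pairs `Aᵢ` on
`Fᵢ` which no vertex of `Cᵢ` realizes. The `Fᵢ` are pairwise disjoint, so the `Aᵢ` do not
interfere, and the extension property applied to `⋃ Fᵢ` and `⋃ Aᵢ` gives a vertex `v` realizing
every `Aᵢ` over `Fᵢ` simultaneously. For `i` the colour of `v` this is a contradiction
(`exists_color_extension`). Hence some colour class has the extension property relative to finite
subsets of itself, and the whole hypergraph embeds into it vertex by vertex.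
-/

/-- Recursive construction of a sequence whose `n`-th term has to satisfy a condition `P n`
depending only on the earlier terms. -/
lemma exists_seq_of_step (P : ℕ → (ℕ → ℕ) → ℕ → Prop)
    (hloc : ∀ n g g' v, (∀ m < n, g m = g' m) → P n g v → P n g' v)
    (hstep : ∀ n f, (∀ m < n, P m f (f m)) → ∃ v, P n f v) :
    ∃ f : ℕ → ℕ, ∀ n, P n f (f n) := by
  have hstep' : ∀ n f, ∃ v, (∀ m < n, P m f (f m)) → P n f v := by
    intro n f
    by_cases h : ∀ m < n, P m f (f m)
    · obtain ⟨v, hv⟩ := hstep n f h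
      exact ⟨v, fun _ => hv⟩
    · exact ⟨0, fun h' => absurd h' h⟩
  choose w hw using hstep'
  let step : ∀ n : ℕ, (∀ m, m < n → ℕ) → ℕ :=
    fun n g => w n (fun m => if h : m < n then g m h else 0)
  let f : ℕ → ℕ := WellFounded.fix Nat.lt_wfRel.wf step
  have hf : ∀ n, f n = w n (fun m => if m < n then f m else 0) := by
    intro n
    have := WellFounded.fix_eq Nat.lt_wfRel.wf step n
    simpa [step, f] using this
  refine ⟨f, fun n => ?_⟩
  induction n using Nat.strong_induction_on with
  | _ n ih =>
    rw [hf n]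
    refine hloc n (fun m => if m < n then f m else 0) f _ (fun m hm => by simp [hm]) ?_
    refine hw n _ fun m hm => ?_
    have := ih m hm
    simp only [hm, if_true]
    exact hloc m f _ _ (fun l hl => by simp [hl.trans hm]) this

/-- Some colour class has the extension property relative to its own finite subsets. -/
lemma exists_color_extension (R : Set (Finset ℕ))
    (hext : ∀ (F : Finset ℕ) (A : Set (Finset ℕ)),
      (∀ s ∈ A, s ⊆ F ∧ s.card = 2) →
      ∃ v : ℕ, v ∉ F ∧ ∀ x ∈ F, ∀ y ∈ F, x ≠ y →
        (({v, x, y} : Finset ℕ) ∈ R ↔ ({x, y} : Finset ℕ) ∈ A))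
    {k : ℕ} (c : ℕ → Fin k) :
    ∃ i : Fin k, ∀ (F : Finset ℕ) (A : Set (Finset ℕ)),
      (∀ x ∈ F, c x = i) → (∀ s ∈ A, s ⊆ F ∧ s.card = 2) →
      ∃ v : ℕ, v ∉ F ∧ c v = i ∧ ∀ x ∈ F, ∀ y ∈ F, x ≠ y →
        (({v, x, y} : Finset ℕ) ∈ R ↔ ({x, y} : Finset ℕ) ∈ A) := by
  by_contra! hcon
  choose F A hF hA hbad using hcon
  obtain ⟨v, hvF, hv⟩ := hext (Finset.univ.biUnion F) (⋃ i, A i) (by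
    intro s hs
    obtain ⟨i, hi⟩ := Set.mem_iUnion.1 hs
    exact ⟨(hA i s hi).1.trans (Finset.subset_biUnion_of_mem F (Finset.mem_univ i)),
      (hA i s hi).2⟩)
  have hmem : ∀ i, ∀ x ∈ F i, x ∈ Finset.univ.biUnion F := fun i x hx =>
    Finset.mem_biUnion.2 ⟨i, Finset.mem_univ i, hx⟩
  obtain ⟨x, hx, y, hy, hxy, hne⟩ := hbad (c v) v (fun h => hvF (hmem _ v h)) rfl
  have key : ({x, y} : Finset ℕ) ∈ (⋃ i, A i) ↔ ({x, y} : Finset ℕ) ∈ A (c v) := by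
    refine ⟨fun h => ?_, fun h => Set.mem_iUnion.2 ⟨_, h⟩⟩
    obtain ⟨j, hj⟩ := Set.mem_iUnion.1 h
    -- a pair of `A j` lies in the colour class `j`, so the colour of `x` determines `j`
    have hxj : c x = j := hF j x ((hA j _ hj).1 (by simp))
    have hjv : j = c v := hxj.symm.trans (hF _ x hx)
    exact hjv ▸ hj
  have := (hv x (hmem _ x hx) y (hmem _ y hy) hxy).trans key
  tauto


/-- The generic 3-uniform hypergraph is indivisible: let `R` be a set of
3-element subsets of `ℕ` such that for every finite `F ⊆ ℕ` and every set `A` of 2-element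
subsets of `F` there is `v ∉ F` with `{v, x, y} ∈ R ↔ {x, y} ∈ A` for all distinct
`x, y ∈ F`. Then every finite coloring of `ℕ` is constant on the image of some
self-embedding of the hypergraph. -/
theorem genericHypergraph_indivisible
    (R : Set (Finset ℕ))
    (hR : ∀ s ∈ R, s.card = 3)
    (hext : ∀ (F : Finset ℕ) (A : Set (Finset ℕ)),
      (∀ s ∈ A, s ⊆ F ∧ s.card = 2) →
      ∃ v : ℕ, v ∉ F ∧ ∀ x ∈ F, ∀ y ∈ F, x ≠ y →
        (({v, x, y} : Finset ℕ) ∈ R ↔ ({x, y} : Finset ℕ) ∈ A)) :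
    ∀ k : ℕ, 1 ≤ k → ∀ c : ℕ → Fin k,
      ∃ f : ℕ → ℕ, Function.Injective f ∧
        (∀ x y z : ℕ, x ≠ y → x ≠ z → y ≠ z →
          (({f x, f y, f z} : Finset ℕ) ∈ R ↔ ({x, y, z} : Finset ℕ) ∈ R)) ∧
        ∃ i : Fin k, ∀ x : ℕ, c (f x) = i := by
  intro k _ c
  obtain ⟨i, hi⟩ := exists_color_extension R hext c
  obtain ⟨f, hf⟩ := exists_seq_of_step
    (fun n g v => c v = i ∧ (∀ m < n, g m ≠ v) ∧
      ∀ x < n, ∀ y < n, x ≠ y →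
        (({v, g x, g y} : Finset ℕ) ∈ R ↔ ({n, x, y} : Finset ℕ) ∈ R))
    (by
      rintro n g g' v hg ⟨h1, h2, h3⟩
      refine ⟨h1, fun m hm => hg m hm ▸ h2 m hm, fun x hx y hy hxy => ?_⟩
      rw [← hg x hx, ← hg y hy]
      exact h3 x hx y hy hxy)
    (by
      intro n g hg
      have hinj : ∀ x < n, ∀ y < n, g x = g y → x = y := by
        intro x hx y hy hxy
        rcases lt_trichotomy x y with h | h | h
        · exact absurd hxy ((hg y hy).2.1 x h)
        · exact h
        · exact absurd hxy.symm ((hg x hx).2.1 y h)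
      obtain ⟨v, hvF, hcv, hv⟩ := hi ((Finset.range n).image g)
        {s | ∃ x < n, ∃ y < n, x ≠ y ∧ s = {g x, g y} ∧ ({n, x, y} : Finset ℕ) ∈ R}
        (by
          intro a ha
          obtain ⟨m, hm, rfl⟩ := Finset.mem_image.1 ha
          exact (hg m (Finset.mem_range.1 hm)).1)
        (by
          rintro s ⟨x, hx, y, hy, hxy, rfl, -⟩
          refine ⟨?_, Finset.card_pair fun h => hxy (hinj x hx y hy h)⟩
          intro a ha
          rcases Finset.mem_insert.1 ha with rfl | ha
          · exact Finset.mem_image_of_mem g (Finset.mem_range.2 hx)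
          · rw [Finset.mem_singleton.1 ha]
            exact Finset.mem_image_of_mem g (Finset.mem_range.2 hy))
      have hmem : ∀ m < n, g m ∈ (Finset.range n).image g := fun m hm =>
        Finset.mem_image_of_mem g (Finset.mem_range.2 hm)
      refine ⟨v, hcv, fun m hm h => hvF (h ▸ hmem m hm), fun x hx y hy hxy => ?_⟩
      rw [hv _ (hmem x hx) _ (hmem y hy) fun h => hxy (hinj x hx y hy h)]
      refine ⟨?_, fun h => ⟨x, hx, y, hy, hxy, rfl, h⟩⟩
      -- injectivity of `g` below `n` recovers the pair of indices from the pair of images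
      rintro ⟨x', hx', y', hy', -, heq, h⟩
      have hx1 : g x = g x' ∨ g x = g y' := by
        have : g x ∈ ({g x', g y'} : Finset ℕ) := heq ▸ by simp
        simpa using this
      have hy1 : g y = g x' ∨ g y = g y' := by
        have : g y ∈ ({g x', g y'} : Finset ℕ) := heq ▸ by simp
        simpa using this
      rcases hx1 with h1 | h1 <;> rcases hy1 with h2 | h2
      · exact absurd (hinj x hx y hy (h1.trans h2.symm)) hxy
      · rwa [hinj x hx x' hx' h1, hinj y hy y' hy' h2]
      · rwa [hinj x hx y' hy' h1, hinj y hy x' hx' h2, Finset.pair_comm]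
      · exact absurd (hinj x hx y hy (h1.trans h2.symm)) hxy)
  refine ⟨f, ?_, ?_, i, fun x => (hf x).1⟩
  · intro x y hxy
    rcases lt_trichotomy x y with h | h | h
    · exact absurd hxy ((hf y).2.1 x h)
    · exact h
    · exact absurd hxy.symm ((hf x).2.1 y h)
  · intro x y z hxy hxz hyz
    -- the construction decides each triple at its largest index
    have hmax : (y < x ∧ z < x) ∨ (x < y ∧ z < y) ∨ (x < z ∧ y < z) := by omega
    rcases hmax with ⟨h1, h2⟩ | ⟨h1, h2⟩ | ⟨h1, h2⟩
    · exact (hf x).2.2 y h1 z h2 hyz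
    · rw [Finset.insert_comm (f x), Finset.insert_comm x]
      exact (hf y).2.2 x h1 z h2 hxz
    · rw [Finset.pair_comm (f y), Finset.pair_comm y, Finset.insert_comm (f x),
        Finset.insert_comm x]
      exact (hf z).2.2 x h1 y h2 hxy
end

section
/- The generic bipartite graph is indivisible: let p : ℕ → {0, 1} have both fibers infinite, and let G be a graph on ℕ such that adjacent vertices always have different p-values, and for each i ∈ {0, 1}, every finite set F ⊆ p⁻¹(i), and every subset A ⊆ F, there exists a vertex v with p(v) = 1 − i, v adjacent to every vertex of A and to no vertex of F ∖ A. Then for every i ∈ {0, 1}, every k ≥ 1, and every coloring c : ℕ → {0, …, k−1}, there exists an injection f : ℕ → ℕ with p(f(x)) = p(x) for all x, and with f(x), f(y) adjacent in G if and only if x, y are adjacent in G, such that c is constant on the set { f(x) : p(x) = i }. -/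
/-!
Write `L` for part `i` and `R` for the other part. Call a pair `(F, P)` with `F ⊆ R` finite and `P`
a predicate on `F` a *type*; a vertex `v ∈ L` realizes it if `v` is adjacent to exactly those
`a ∈ F` with `P a`.

There are a color `j` and a finite `F₀ ⊆ R` such that every type over `R \ F₀` is realized by a
vertex of color `j` (`exists_color_realizing`). Otherwise, every finite `F₀ ⊆ R` could be enlarged,
for any given color, by a disjoint type omitted by that color; amalgamating such types for all the
finitely many colors yields a type omitted by every vertex of `L`, against the extension property.

Hence the color-`j` vertices of `L` together with `R \ F₀` again have the extension property: for
types over `L` realized in `R`, the finite set `F₀` can be avoided, because a type can always be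
extended by a fresh vertex that separates its realizations from a prescribed vertex
(`exists_realizer_notMem`). Inside a set with the extension property the whole graph can be embedded
vertex by vertex (`exists_embedding_of_extension`).
-/

/-- If every type over finite subsets of the infinite set `W` is realized in `D`, then it is realized
in `D` outside any prescribed finite set `B`. -/
lemma exists_realizer_notMem (G : SimpleGraph ℕ) (W D : Set ℕ) (hW : W.Infinite)
    (h : ∀ F : Finset ℕ, (∀ x ∈ F, x ∈ W) → ∀ P : ℕ → Prop,
      ∃ v ∈ D, ∀ a ∈ F, (G.Adj v a ↔ P a)) (B : Finset ℕ) :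
    ∀ F : Finset ℕ, (∀ x ∈ F, x ∈ W) → ∀ P : ℕ → Prop,
      ∃ v ∈ D, v ∉ B ∧ ∀ a ∈ F, (G.Adj v a ↔ P a) := by
  classical
  induction B using Finset.induction_on with
  | empty => simpa using h
  | insert b B _ ih =>
    intro F hF P
    obtain ⟨w, hwW, hwF⟩ := hW.exists_notMem_finset F
    -- At the fresh vertex `w`, prescribe the opposite of the behaviour of `b`.
    obtain ⟨v, hvD, hvB, hv⟩ := ih (insert w F)
      (by
        intro x hx
        rcases Finset.mem_insert.1 hx with rfl | hx
        · exact hwW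
        · exact hF x hx)
      (fun a => if a = w then ¬ G.Adj b w else P a)
    refine ⟨v, hvD, ?_, ?_⟩
    · intro hmem
      rcases Finset.mem_insert.1 hmem with rfl | hmem
      · have := hv w (Finset.mem_insert_self _ _)
        simp at this
      · exact hvB hmem
    · intro a ha
      have haw : a ≠ w := fun e => hwF (e ▸ ha)
      simpa [haw] using hv a (Finset.mem_insert_of_mem ha)

/-- Some color `j` realizes, within part `i`, all types over the other part minus a finite set. -/
lemma exists_color_realizing (p : ℕ → Fin 2) (G : SimpleGraph ℕ) (i : Fin 2) {k : ℕ}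
    (c : ℕ → Fin k)
    (h : ∀ F : Finset ℕ, (∀ x ∈ F, p x ≠ i) → ∀ P : ℕ → Prop,
      ∃ v, p v = i ∧ ∀ a ∈ F, (G.Adj v a ↔ P a)) :
    ∃ (j : Fin k) (F₀ : Finset ℕ), (∀ x ∈ F₀, p x ≠ i) ∧
      ∀ F : Finset ℕ, (∀ x ∈ F, p x ≠ i ∧ x ∉ F₀) → ∀ P : ℕ → Prop,
        ∃ v, (p v = i ∧ c v = j) ∧ ∀ a ∈ F, (G.Adj v a ↔ P a) := by
  classical
  by_contra! hneg
  -- Amalgamate omitted types, one color at a time.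
  have key : ∀ S : Finset (Fin k), ∃ F : Finset ℕ, (∀ x ∈ F, p x ≠ i) ∧ ∃ P : ℕ → Prop,
      ∀ v, p v = i → (∀ a ∈ F, (G.Adj v a ↔ P a)) → c v ∉ S := by
    intro S
    induction S using Finset.induction_on with
    | empty => exact ⟨∅, by simp, fun _ => True, by simp⟩
    | insert j S _ ih =>
      obtain ⟨F₀, hF₀, P₀, h₀⟩ := ih
      obtain ⟨F, hF, P, hP⟩ := hneg j F₀ hF₀
      refine ⟨F₀ ∪ F, ?_, fun a => if a ∈ F₀ then P₀ a else P a, ?_⟩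
      · intro x hx
        rcases Finset.mem_union.1 hx with hx | hx
        · exact hF₀ x hx
        · exact (hF x hx).1
      · intro v hv hty hmem
        rcases Finset.mem_insert.1 hmem with hj | hS
        · obtain ⟨a, ha, hbad⟩ := hP v ⟨hv, hj⟩
          have := hty a (Finset.mem_union_right _ ha)
          simp only [(hF a ha).2, if_false] at this
          tauto
        · refine h₀ v hv (fun a ha => ?_) hS
          simpa [ha] using hty a (Finset.mem_union_left _ ha)
  obtain ⟨F, hF, P, hP⟩ := key Finset.univ
  obtain ⟨v, hv, hty⟩ := h F hF P
  exact hP v hv hty (Finset.mem_univ _)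

/-- The sequence whose `n`-th term is `s n g`, where `g` agrees with the sequence below `n`
and vanishes from `n` on. -/
noncomputable def courseOfValues (s : ℕ → (ℕ → ℕ) → ℕ) : ℕ → ℕ
  | n => s n (fun m => if _h : m < n then courseOfValues s m else 0)

/-- A set `D` with the bipartite extension property (with realizations outside any finite set)
contains a copy of the whole graph, built one vertex at a time. -/
lemma exists_embedding_of_extension (p : ℕ → Fin 2) (G : SimpleGraph ℕ)
    (hbip : ∀ x y : ℕ, G.Adj x y → p x ≠ p y) (D : Set ℕ)
    (h : ∀ (q : Fin 2) (B F : Finset ℕ), (∀ x ∈ F, x ∈ D ∧ p x ≠ q) → ∀ P : ℕ → Prop,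
      ∃ v ∈ D, p v = q ∧ v ∉ B ∧ ∀ a ∈ F, (G.Adj v a ↔ P a)) :
    ∃ f : ℕ → ℕ, Function.Injective f ∧ (∀ x, p (f x) = p x) ∧
      (∀ x y, G.Adj (f x) (f y) ↔ G.Adj x y) ∧ ∀ x, f x ∈ D := by
  classical
  have step : ∀ (n : ℕ) (g : ℕ → ℕ), ∃ v,
      (∀ m < n, g m ∈ D ∧ p (g m) = p m ∧ ∀ l < m, g m ≠ g l) →
        v ∈ D ∧ p v = p n ∧ ∀ m < n, v ≠ g m ∧ (G.Adj v (g m) ↔ G.Adj n m) := by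
    intro n g
    by_cases hg : ∀ m < n, g m ∈ D ∧ p (g m) = p m ∧ ∀ l < m, g m ≠ g l
    swap
    · exact ⟨0, fun h' => absurd h' hg⟩
    have hinj : ∀ m < n, ∀ l < n, g m = g l → m = l := by
      intro m hm l hl e
      rcases lt_trichotomy m l with hlt | heq | hlt
      · exact absurd e.symm ((hg l hl).2.2 m hlt)
      · exact heq
      · exact absurd e ((hg m hm).2.2 l hlt)
    obtain ⟨v, hvD, hvp, hvB, hv⟩ := h (p n) ((Finset.range n).image g)
      (((Finset.range n).filter (fun m => p m ≠ p n)).image g)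
      (by
        intro x hx
        simp only [Finset.mem_image, Finset.mem_filter, Finset.mem_range] at hx
        obtain ⟨m, ⟨hm, hpm⟩, rfl⟩ := hx
        exact ⟨(hg m hm).1, by rw [(hg m hm).2.1]; exact hpm⟩)
      (fun a => ∃ m < n, g m = a ∧ G.Adj n m)
    refine ⟨v, fun _ => ⟨hvD, hvp, fun m hm => ⟨?_, ?_⟩⟩⟩
    · rintro rfl
      exact hvB (Finset.mem_image_of_mem g (Finset.mem_range.2 hm))
    · by_cases hpm : p m = p n
      · -- Vertices in the same part are never adjacent.
        constructor
        · intro hadj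
          exact absurd (by rw [hvp, (hg m hm).2.1, hpm]) (hbip _ _ hadj)
        · intro hadj
          exact absurd hpm.symm (hbip _ _ hadj)
      · rw [hv (g m) (Finset.mem_image_of_mem g
          (Finset.mem_filter.2 ⟨Finset.mem_range.2 hm, hpm⟩))]
        constructor
        · rintro ⟨l, hl, e, hadj⟩
          rwa [hinj l hl m hm e] at hadj
        · intro hadj
          exact ⟨m, hm, rfl, hadj⟩
  choose s hs using step
  set f := courseOfValues s with hf
  have good : ∀ n, f n ∈ D ∧ p (f n) = p n ∧
      ∀ m < n, f n ≠ f m ∧ (G.Adj (f n) (f m) ↔ G.Adj n m) := by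
    intro n
    induction n using Nat.strong_induction_on with
    | _ n ih =>
      have hfn : f n = s n (fun m => if _h : m < n then f m else 0) := by
        rw [hf, courseOfValues]
      have := hs n (fun m => if _h : m < n then f m else 0) (by
        intro m hm
        refine ⟨by simpa [hm] using (ih m hm).1, by simpa [hm] using (ih m hm).2.1, ?_⟩
        intro l hl
        simpa [hm, hl.trans hm] using ((ih m hm).2.2 l hl).1)
      rw [← hfn] at this
      refine ⟨this.1, this.2.1, fun m hm => ?_⟩
      simpa [hm] using this.2.2 m hm
  refine ⟨f, ?_, fun x => (good x).2.1, ?_, fun x => (good x).1⟩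
  · intro x y e
    rcases lt_trichotomy x y with hlt | heq | hlt
    · exact absurd e.symm ((good y).2.2 x hlt).1
    · exact heq
    · exact absurd e ((good x).2.2 y hlt).1
  · intro x y
    rcases lt_trichotomy x y with hlt | rfl | hlt
    · rw [G.adj_comm, G.adj_comm x y]
      exact ((good y).2.2 x hlt).2
    · simp
    · exact ((good x).2.2 y hlt).2


/-- The generic bipartite graph is indivisible: let `p : ℕ → Fin 2` have both
fibers infinite and let `G` be a graph on `ℕ` whose edges only join vertices with different
`p`-values, with the bipartite extension property. Then for each part `i` and every finite
coloring of `ℕ` there is a part-preserving self-embedding `f` of the structure such that the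
coloring is constant on the image under `f` of the part-`i` vertices. -/
theorem genericBipartite_indivisible
    (p : ℕ → Fin 2)
    (hfib : ∀ i : Fin 2, {x : ℕ | p x = i}.Infinite)
    (G : SimpleGraph ℕ)
    (hbip : ∀ x y : ℕ, G.Adj x y → p x ≠ p y)
    (hext : ∀ (i : Fin 2) (F : Finset ℕ), (∀ x ∈ F, p x = i) → ∀ A ⊆ F,
      ∃ v : ℕ, p v = 1 - i ∧ (∀ a ∈ A, G.Adj v a) ∧ (∀ b ∈ F, b ∉ A → ¬ G.Adj v b)) :
    ∀ i : Fin 2, ∀ k : ℕ, 1 ≤ k → ∀ c : ℕ → Fin k,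
      ∃ f : ℕ → ℕ, Function.Injective f ∧
        (∀ x : ℕ, p (f x) = p x) ∧
        (∀ x y : ℕ, G.Adj (f x) (f y) ↔ G.Adj x y) ∧
        ∃ j : Fin k, ∀ x : ℕ, p x = i → c (f x) = j := by

  classical
  intro i k _ c
  have hfin : ∀ a b : Fin 2, a ≠ b → a = 1 - b := by decide
  have hfin' : ∀ b : Fin 2, 1 - (1 - b) = b := by decide
  have hne : ∀ b : Fin 2, 1 - b ≠ b := by decide
  have hreal : ∀ (q : Fin 2) (F : Finset ℕ), (∀ x ∈ F, p x ≠ q) → ∀ P : ℕ → Prop,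
      ∃ v, p v = q ∧ ∀ a ∈ F, (G.Adj v a ↔ P a) := by
    intro q F hF P
    obtain ⟨v, hv, hA, hB⟩ := hext (1 - q) F (fun x hx => hfin _ _ (hF x hx)) (F.filter P)
      (Finset.filter_subset _ _)
    refine ⟨v, by rw [hv, hfin'], fun a ha => ⟨fun hadj => ?_, fun hPa => ?_⟩⟩
    · by_contra hPa
      exact hB a ha (fun hm => hPa (Finset.mem_filter.1 hm).2) hadj
    · exact hA a (Finset.mem_filter.2 ⟨ha, hPa⟩)
  obtain ⟨j, F₀, hF₀, hj⟩ := exists_color_realizing p G i c (hreal i)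
  obtain ⟨f, hinj, hp, hadj, hD⟩ := exists_embedding_of_extension p G hbip
    {v | (p v = i → c v = j) ∧ v ∉ F₀} (by
      intro q B F hF P
      by_cases hq : q = i
      · subst hq
        have hinf : {x | p x ≠ q ∧ x ∉ F₀}.Infinite := by
          refine ((hfib (1 - q)).sdiff F₀.finite_toSet).mono ?_
          rintro x ⟨hx, hx'⟩
          refine ⟨?_, hx'⟩
          rw [show p x = 1 - q from hx]
          exact hne q
        obtain ⟨v, hv, hvB, hty⟩ := exists_realizer_notMem G {x | p x ≠ q ∧ x ∉ F₀}
          {v | p v = q ∧ c v = j} hinf hj B F (fun x hx => ⟨(hF x hx).2, (hF x hx).1.2⟩) P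
        exact ⟨v, ⟨fun _ => hv.2, fun hm => hF₀ v hm hv.1⟩, hv.1, hvB, hty⟩
      · have hinf : {x | p x ≠ q}.Infinite := by
          refine (hfib (1 - q)).mono ?_
          intro x hx
          change p x ≠ q
          rw [show p x = 1 - q from hx]
          exact hne q
        obtain ⟨v, hv, hvB, hty⟩ := exists_realizer_notMem G {x | p x ≠ q} {v | p v = q} hinf
          (hreal q) (B ∪ F₀) F (fun x hx => (hF x hx).2) P
        rw [Finset.mem_union, not_or] at hvB
        exact ⟨v, ⟨fun e => absurd (hv.symm.trans e) hq, hvB.2⟩, hv, hvB.1, hty⟩)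
  exact ⟨f, hinj, hp, hadj, j, fun x hx => (hD x).1 ((hp x).trans hx)⟩
end
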